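/- Assume Schanuel's Conjecture. If f and g are two exponential polynomials in the ring 𝓔 having infinitely many common zeros in ℂ, then there exists an exponential polynomial h ∈ 𝓔 such that h divides both f and g in the ring 𝓔 and h has infinitely many zeros in ℂ. (Shapiro's Conjecture.) -/

import Mathlib

open Complex Set

noncomputable section

/-- `f` is an exponential polynomial, i.e. an element of the ring `𝓔`. -/
def IsExpPoly (f : ℂ → ℂ) : Prop :=
  ∃ (N : ℕ) (lam mu : Fin N → ℂ),
    ∀ z : ℂ, f z = ∑ i, lam i * Complex.exp (mu i * z)

/-- `h` divides `f` in the ring `𝓔`. -/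
def EDvd (h f : ℂ → ℂ) : Prop :=
  ∃ q : ℂ → ℂ, IsExpPoly q ∧ f = h * q

/-- `f` is a unit of the ring `𝓔`. -/
def EUnit (f : ℂ → ℂ) : Prop :=
  IsExpPoly f ∧ ∃ g : ℂ → ℂ, IsExpPoly g ∧ f * g = 1

/-- `f` is irreducible in the ring `𝓔`. -/
def EIrreducible (f : ℂ → ℂ) : Prop :=
  IsExpPoly f ∧ f ≠ 0 ∧ ¬ EUnit f ∧
    ∀ g h : ℂ → ℂ, IsExpPoly g → IsExpPoly h → f = g * h → EUnit g ∨ EUnit h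

/-- canonical representation: pairwise distinct exponents, nonzero coefficients. -/
def IsCanonicalRep (f : ℂ → ℂ) {N : ℕ} (lam mu : Fin N → ℂ) : Prop :=
  (∀ i, lam i ≠ 0) ∧ Function.Injective mu ∧
    ∀ z : ℂ, f z = ∑ i, lam i * Complex.exp (mu i * z)

/-- `f` is a simple exponential polynomial: its support has `ℚ`-dimension 1. -/
def IsSimple (f : ℂ → ℂ) : Prop :=
  ∃ (N : ℕ) (lam mu : Fin N → ℂ), IsCanonicalRep f lam mu ∧
    Module.finrank ℚ (Submodule.span ℚ (Set.range mu)) = 1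

/-- Transcendence degree over `ℚ` of (the field generated by) a set of complex numbers. -/
noncomputable def trdegQ (s : Set ℂ) : Cardinal.{0} :=
  ⨆ t : {t : Finset ℂ // ↑t ⊆ s ∧ AlgebraicIndependent ℚ (Subtype.val : {x : ℂ // x ∈ t} → ℂ)},
    (t.1.card : Cardinal)

/-- Schanuel's Conjecture. -/
def SchanuelConjecture : Prop :=
  ∀ (n : ℕ) (lam : Fin n → ℂ), LinearIndependent ℚ lam →
    (n : Cardinal) ≤ trdegQ (Set.range lam ∪ Set.range fun i => Complex.exp (lam i))

/-!
Write the common zeros of `f` and `g` as the zeros of `P (e^{ωz})` and `Q (e^{ωz})`, with `P`, `Q`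
polynomials and `ω` linearly independent over `ℚ`. If `gcd (P, Q)` has infinitely many zeros it is
the required divisor, so let `P` and `Q` be coprime. A resultant makes the `e^{ωⱼz}` algebraically
dependent, so Schanuel's conjecture confines every common zero `z` to a fixed field, and then all
differences `(μᵢ - μⱼ) z`, with `i` and `j` in a common minimal vanishing subsum, to a fixed
finite-dimensional space `W` over `ℚ`. A Wronskian argument over the derivations of `ℂ` shows that,
after passing to an infinite set of zeros, `exp ((μᵢ - μⱼ) (z - z'))` is algebraic. By the four
exponentials theorem (a consequence of Schanuel's conjecture) either all the differences
`μᵢ - μⱼ` are commensurable, or all the zeros lie on one line `z₀ + ℚ d`; in the latter case the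
Skolem–Mahler–Lech theorem and Kummer theory show that the `exp ((μᵢ - μⱼ) d)` are roots of unity,
so the differences are commensurable again. Hence they are integer multiples of some `a ≠ 0`, and
every subsum vanishing at `w` is divisible by `e^{az} - e^{aw}`.
-/

/-! ### Infinite fibres, derivations and valuations -/

theorem infinite_inter_fiber_of_finite_image {α β : Type*} {S : Set α} (hS : S.Infinite) {f : α → β}
    (hf : (f '' S).Finite) : ∃ b, (S ∩ f ⁻¹' {b}).Infinite := by
  by_contra! hfibers
  exact hS (Set.Finite.of_finite_fibers f hf fun b _ ↦ hfibers b)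

theorem formallyEtale_mvPolynomial_of_isTranscendenceBasis {k L ι : Type*} [Field k] [CharZero k]
    [Field L] [Algebra k L] {x : ι → L} (hx : IsTranscendenceBasis k x)
    [Algebra (MvPolynomial ι k) L] [IsScalarTower k (MvPolynomial ι k) L]
    (hX : ∀ i, algebraMap (MvPolynomial ι k) L (MvPolynomial.X i) = x i) :
    Algebra.FormallyEtale (MvPolynomial ι k) L := by
  let R := MvPolynomial ι k
  have aeval_eq : (Algebra.ofId R L).restrictScalars k = MvPolynomial.aeval x :=
    MvPolynomial.algHom_ext fun i ↦ by simp [Algebra.ofId_apply, R, hX]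
  have : FaithfulSMul R L := (faithfulSMul_iff_algebraMap_injective R L).2 fun p q hpq ↦
    hx.1 (by rw [← aeval_eq]; exact hpq)
  let F := FractionRing R
  let : Algebra F L := FractionRing.liftAlgebra R L
  have : IsScalarTower R F L := FractionRing.isScalarTower_liftAlgebra R L
  have : Algebra.IsAlgebraic R L :=
    hx.isAlgebraic_iff.2 fun i ↦ hX i ▸ isAlgebraic_algebraMap _
  have : Algebra.IsAlgebraic F L :=
    (IsFractionRing.comap_isAlgebraic_iff (A := R) (K := F) (C := L)).1 this
  have : CharZero F := charZero_of_injective_algebraMap (IsFractionRing.injective R F)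
  have : Algebra.FormallyEtale R F := .of_isLocalization (nonZeroDivisors R)
  have : Algebra.FormallyEtale F L := .of_isSeparable F L
  exact .comp R F L

theorem exists_derivation_apply_eq_one {k L : Type*} [Field k] [CharZero k] [Field L] [Algebra k L]
    {x : L} (hx : Transcendental k x) : ∃ D : Derivation k L L, D x = 1 := by
  have hindep : AlgebraicIndepOn k id ({x} : Set L) :=
    algebraicIndependent_unique_type_iff.2 hx
  obtain ⟨t, hxt, ht⟩ := exists_isTranscendenceBasis_superset hindep
  let i : t := ⟨x, hxt rfl⟩
  let : Algebra (MvPolynomial t k) L := (MvPolynomial.aeval (Subtype.val : t → L)).toAlgebra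
  have : IsScalarTower k (MvPolynomial t k) L := .of_algebraMap_eq fun r ↦
    ((MvPolynomial.aeval (Subtype.val : t → L)).commutes r).symm
  have algebraMap_X (j : t) : algebraMap (MvPolynomial t k) L (MvPolynomial.X j) = j :=
    MvPolynomial.aeval_X _ j
  have := formallyEtale_mvPolynomial_of_isTranscendenceBasis ht algebraMap_X
  let e := KaehlerDifferential.tensorKaehlerEquivOfFormallyEtale k (MvPolynomial t k) L
  let b := (KaehlerDifferential.mvPolynomialBasis k t).baseChange L
  have e_symm_D : e.symm (KaehlerDifferential.D k L x) = b i := by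
    conv_lhs => rw [show x = algebraMap (MvPolynomial t k) L (MvPolynomial.X i) from
      (algebraMap_X i).symm]
    rw [KaehlerDifferential.tensorKaehlerEquivOfFormallyEtale_symm_D_algebraMap,
      Module.Basis.baseChange_apply, KaehlerDifferential.mvPolynomialBasis_apply]
  refine ⟨((b.coord i).comp e.symm.toLinearMap).compDer (KaehlerDifferential.D k L), ?_⟩
  change b.coord i (e.symm (KaehlerDifferential.D k L x)) = 1
  rw [e_symm_D, Module.Basis.coord_apply, b.repr_self, Finsupp.single_eq_same]

open scoped Differential

section DifferentialField

variable (L : Type*) [Field L] [Differential L]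

/-- The field of constants of a differential field. -/
def constantSubfield : Subfield L where
  carrier := {x | x′ = 0}
  mul_mem' {a b} (ha : a′ = 0) (hb : b′ = 0) := show (a * b)′ = 0 by simp [ha, hb]
  one_mem' := Derivation.map_one_eq_zero _
  add_mem' {a b} (ha : a′ = 0) (hb : b′ = 0) := show (a + b)′ = 0 by simp [ha, hb]
  zero_mem' := map_zero _
  neg_mem' {a} (ha : a′ = 0) := show (-a)′ = 0 by simp [ha]
  inv_mem' a (ha : a′ = 0) := show (a⁻¹)′ = 0 by simp [Derivation.leibniz_inv, ha]

/-- The derivation of a differential field, regarded as linear over the field of constants. -/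
def constantLinearDeriv : Derivation (constantSubfield L) L L :=
  Derivation.mk'
    { toFun := Differential.deriv
      map_add' := map_add _
      map_smul' := fun c x ↦ by
        have hc : (c : L)′ = 0 := c.2
        simp [Algebra.smul_def, Subfield.algebraMap_ofSubfield, hc] }
    fun a b ↦ Derivation.leibniz _ a b

variable {L}

theorem mem_constantSubfield_of_isAlgebraic [CharZero L] {x : L}
    (hx : IsAlgebraic (constantSubfield L) x) : x ∈ constantSubfield L := by
  let p := minpoly (constantSubfield L) x
  have hp : Polynomial.aeval x p = 0 := minpoly.aeval _ x
  have hp' : Polynomial.aeval x p.derivative ≠ 0 :=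
    (minpoly.irreducible hx.isIntegral).separable.aeval_derivative_ne_zero hp
  have chain_rule := (constantLinearDeriv L).map_aeval p x
  rw [hp, map_zero, smul_eq_mul, eq_comm, mul_eq_zero] at chain_rule
  exact chain_rule.resolve_left hp'

end DifferentialField

section Valuation

variable {K L : Type*} [Field K] [Field L] [Algebra K L] {Γ : Type*}
  [LinearOrderedCommGroupWithZero Γ] (v : Valuation L Γ) [v.IsTrivialOn K]

theorem linearIndependent_of_injective_valuation {ι : Type*} {x : ι → L} (hx : ∀ i, x i ≠ 0)
    (hinj : Function.Injective (v ∘ x)) : LinearIndependent K x := by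
  classical
  rw [linearIndependent_iff']
  intro s c hsum
  by_contra! hne
  have hsupp : (s.filter (c · ≠ 0)).Nonempty := by simpa [Finset.filter_nonempty_iff] using hne
  obtain ⟨m, hm, hmax⟩ := (s.filter (c · ≠ 0)).exists_max_image (v ∘ x) hsupp
  have v_smul {i : ι} (hi : c i ≠ 0) : v (c i • x i) = v (x i) := by
    rw [Algebra.smul_def, map_mul, Valuation.IsTrivialOn.eq_one _ hi, one_mul]
  have hcm : c m ≠ 0 := (Finset.mem_filter.1 hm).2
  have v_sum : v (∑ i ∈ s, c i • x i) = v (c m • x m) := by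
    refine v.map_sum_eq_of_lt (Finset.mem_filter.1 hm).1 fun i hi ↦ ?_
    rw [Finset.mem_sdiff, Finset.mem_singleton] at hi
    rw [v_smul hcm]
    by_cases hci : c i = 0
    · simpa [hci, zero_lt_iff] using hx m
    · rw [v_smul hci]
      exact (hmax i (Finset.mem_filter.2 ⟨hi.1, hci⟩)).lt_of_ne (hinj.ne hi.2)
  rw [hsum, map_zero, v_smul hcm, eq_comm, map_eq_zero] at v_sum
  exact hx m v_sum

theorem finite_valuation_image_of_fg {G : Submodule K L} (hG : G.FG) :
    (v '' (G \ {0} : Set L)).Finite := by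
  choose x hxG hvx using fun γ : v '' (G \ {0} : Set L) ↦ γ.2
  have hindep : LinearIndependent K x :=
    linearIndependent_of_injective_valuation v (fun γ ↦ (hxG γ).2) fun γ γ' h ↦
      Subtype.ext (by simpa [hvx] using h)
  have hindepG : LinearIndependent K fun γ ↦ (⟨x γ, (hxG γ).1⟩ : G) :=
    hindep.of_comp G.subtype
  have : Module.Finite K G := Module.Finite.iff_fg.2 hG
  have := hindepG.finite
  exact Set.toFinite _

theorem isTrivialOn_of_algebraMap_mem {A : ValuationSubring L}
    (hA : ∀ c : K, algebraMap K L c ∈ A) : A.valuation.IsTrivialOn K where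
  eq_one c hc := by
    have hinv := (A.valuation_le_one_iff _).2 (hA c⁻¹)
    rw [map_inv₀, map_inv₀] at hinv
    refine ((A.valuation_le_one_iff _).2 (hA c)).antisymm ?_
    exact (inv_le_one₀ (zero_lt_iff.2 (by simpa using hc))).1 hinv

end Valuation

/-! ### Exponentials of finite-dimensional rational spaces -/

/-- The rational subspace of those `w` whose exponential lies in `H`, for a subgroup `H` of `ℂˣ`
closed under extraction of roots. -/
def expComap (H : Subgroup ℂˣ) (hH : ∀ (x : ℂˣ) (n : ℕ), n ≠ 0 → x ^ n ∈ H → x ∈ H) :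
    Submodule ℚ ℂ where
  carrier := {w | Units.mk0 (exp w) (exp_ne_zero w) ∈ H}
  zero_mem' := by simp
  add_mem' {a b} ha hb := by
    simpa only [mem_ofPred_eq, exp_add, Units.mk0_mul] using H.mul_mem ha hb
  smul_mem' q a ha := by
    refine hH _ q.den q.den_nz ?_
    convert! H.zpow_mem ha q.num using 1
    ext
    simp only [Units.val_pow_eq_pow_val, Units.val_zpow_eq_zpow_val, Units.val_mk0,
      ← exp_nat_mul, ← exp_int_mul, Rat.smul_def, ← mul_assoc]
    exact_mod_cast congrArg (fun r : ℚ ↦ exp (r * a)) q.den_mul_eq_num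

theorem mem_expComap {H : Subgroup ℂˣ} {hH : ∀ (x : ℂˣ) (n : ℕ), n ≠ 0 → x ^ n ∈ H → x ∈ H}
    {w : ℂ} : w ∈ expComap H hH ↔ Units.mk0 (exp w) (exp_ne_zero w) ∈ H := Iff.rfl

theorem mem_unitGroup_of_pow_mem {L : Type*} [Field L] (A : ValuationSubring L) (x : Lˣ) (n : ℕ)
    (hn : n ≠ 0) (hx : x ^ n ∈ A.unitGroup) : x ∈ A.unitGroup := by
  rw [ValuationSubring.mem_unitGroup_iff, Units.val_pow_eq_pow_val, map_pow] at hx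
  exact (pow_eq_one_iff.1 hx).resolve_right hn

theorem exists_valuationSubring_notMem {L : Type*} [Field L] {K : Subfield L}
    (hK : ∀ x : L, IsAlgebraic K x → x ∈ K) {x : L} (hx : x ∉ K) :
    ∃ A : ValuationSubring L, (∀ y ∈ K, y ∈ A) ∧ x ∉ A := by
  have : IsIntegrallyClosedIn K.toSubring L := isIntegrallyClosedIn_iff.2
    ⟨Subtype.val_injective, fun {y} (hy : IsIntegral K y) ↦ ⟨⟨y, hK y hy.isAlgebraic⟩, rfl⟩⟩
  obtain ⟨A, hKA, hxA⟩ :=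
    Subring.exists_le_valuationSubring_of_isIntegrallyClosedIn (R := K.toSubring) hx
  exact ⟨A, fun y hy ↦ hKA hy, hxA⟩

-- A valuation ring `A ⊇ K` missing some `exp w` with `w ∈ W` cuts `W` down to the proper subspace
-- of those `w` for which `exp w` is a unit of `A`.
theorem exists_infinite_subset_exp_sub_mem {K : Subfield ℂ} (hK : ∀ x : ℂ, IsAlgebraic K x → x ∈ K)
    (W : Submodule ℚ ℂ) [FiniteDimensional ℚ W] {α : Type*} {S : Set α} (hS : S.Infinite)
    {ψ : α → ℂ} (hψ : ∀ z ∈ S, ∀ z' ∈ S, ψ z - ψ z' ∈ W)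
    (hfin : ∀ A : ValuationSubring ℂ, (∀ x ∈ K, x ∈ A) →
      ((fun z ↦ A.valuation (exp (ψ z))) '' S).Finite) :
    ∃ S' ⊆ S, S'.Infinite ∧ ∀ z ∈ S', ∀ z' ∈ S', exp (ψ z - ψ z') ∈ K := by
  induction hd : Module.finrank ℚ W using Nat.strong_induction_on generalizing W S with
  | _ d ih =>
  by_cases hW : ∀ w ∈ W, exp w ∈ K
  · exact ⟨S, le_rfl, hS, fun z hz z' hz' ↦ hW _ (hψ z hz z' hz')⟩
  push Not at hW
  obtain ⟨w, hw, hwK⟩ := hW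
  obtain ⟨A, hKA, hwA⟩ := exists_valuationSubring_notMem hK hwK
  obtain ⟨γ, hγ⟩ := infinite_inter_fiber_of_finite_image hS (hfin A hKA)
  let W' := W ⊓ expComap A.unitGroup (mem_unitGroup_of_pow_mem A)
  have hlt : W' < W := inf_lt_left.2 fun hle ↦
    hwA ((A.valuation_le_one_iff _).1 (hle hw : A.valuation (exp w) = 1).le)
  have hψ' : ∀ z ∈ S ∩ (fun z ↦ A.valuation (exp (ψ z))) ⁻¹' {γ},
      ∀ z' ∈ S ∩ (fun z ↦ A.valuation (exp (ψ z))) ⁻¹' {γ}, ψ z - ψ z' ∈ W' := by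
    rintro z ⟨hz, hzγ : A.valuation _ = γ⟩ z' ⟨hz', hzγ' : A.valuation _ = γ⟩
    refine ⟨hψ z hz z' hz', show A.valuation (exp (ψ z - ψ z')) = 1 from ?_⟩
    rw [exp_sub, map_div₀, hzγ, hzγ', div_self]
    simp [← hzγ]
  have : FiniteDimensional ℚ W' := Submodule.finiteDimensional_of_le hlt.le
  obtain ⟨S', hS', hinf, hmem⟩ := ih _ (hd ▸ Submodule.finrank_lt_finrank_of_lt hlt) W' hγ hψ'
    (fun A' hA' ↦ (hfin A' hA').subset (image_mono inter_subset_left)) rfl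
  exact ⟨S', hS'.trans inter_subset_left, hinf, hmem⟩

/-! ### Wronskians -/

section Wronskian

variable {L : Type*} [Field L] [Differential L]

theorem coeff_eq_zero_of_sum_constant_mul_eq_zero {ι : Type*} {y : ι → L}
    (hy : LinearIndependent (constantSubfield L) y) {s : Finset ι} {c : ι → L}
    (hc : ∀ p ∈ s, (c p)′ = 0) (hsum : ∑ p ∈ s, c p * y p = 0) {p : ι} (hp : p ∈ s) : c p = 0 := by
  have hrel : ∑ q ∈ s.attach, (⟨c q, hc q q.2⟩ : constantSubfield L) • y q = 0 := by
    simpa only [Subfield.smul_def, smul_eq_mul, Finset.sum_attach s fun q ↦ c q * y q] using hsum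
  exact congrArg Subtype.val <| linearIndependent_iff'.1 (hy.comp _ Subtype.val_injective)
    s.attach _ hrel ⟨p, hp⟩ (Finset.mem_attach _ _)

theorem sum_erase_deriv_mul_iterate_deriv_eq_zero {ι : Type*} [DecidableEq ι] {y c : ι → L}
    {s : Finset ι} {q : ι} (hcq : c q = 1) {n : ℕ}
    (hc : ∀ a < n + 1, ∑ p ∈ s, c p * Differential.deriv^[a] (y p) = 0) :
    ∀ a < n, ∑ p ∈ s.erase q, (c p)′ * Differential.deriv^[a] (y p) = 0 := by
  intro a ha
  have hnext := hc (a + 1) (by lia)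
  have hderiv := congrArg Differential.deriv (hc a (by lia))
  simp only [map_zero, map_sum, Derivation.leibniz, smul_eq_mul, Finset.sum_add_distrib,
    ← Function.iterate_succ_apply', hnext, zero_add] at hderiv
  rw [Finset.sum_erase s (by simp [hcq]), ← hderiv]
  exact Finset.sum_congr rfl fun p _ ↦ mul_comm _ _

theorem coeff_eq_zero_of_sum_mul_iterate_deriv_eq_zero {ι : Type*} {y : ι → L}
    (hy : LinearIndependent (constantSubfield L) y) {n : ℕ} {s : Finset ι} (hs : s.card ≤ n)
    {c : ι → L} (hc : ∀ a < n, ∑ p ∈ s, c p * Differential.deriv^[a] (y p) = 0) :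
    ∀ p ∈ s, c p = 0 := by
  classical
  induction n generalizing s c with
  | zero => simp [Finset.card_eq_zero.1 (Nat.le_zero.1 hs)]
  | succ n ih =>
    by_contra! hne
    obtain ⟨q, hq, hcq⟩ := hne
    let c' p := c p / c q
    have hc'q : c' q = 1 := div_self hcq
    have hc' : ∀ a < n + 1, ∑ p ∈ s, c' p * Differential.deriv^[a] (y p) = 0 := fun a ha ↦ by
      simp only [c', div_mul_eq_mul_div, ← Finset.sum_div, hc a ha, zero_div]
    have hconst : ∀ p ∈ s.erase q, (c' p)′ = 0 :=
      ih (by rw [Finset.card_erase_of_mem hq]; lia)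
        (sum_erase_deriv_mul_iterate_deriv_eq_zero hc'q hc')
    have hconst' : ∀ p ∈ s, (c' p)′ = 0 := fun p hp ↦ by
      by_cases hpq : p = q
      · simp [hpq, hc'q]
      · exact hconst p (Finset.mem_erase.2 ⟨hpq, hp⟩)
    have := coeff_eq_zero_of_sum_constant_mul_eq_zero hy hconst' (hc' 0 n.succ_pos) hq
    exact one_ne_zero (hc'q.symm.trans this)

/-- A finite-dimensional space over the constants that contains `y⁽ᵃ⁾ / y` for all `a ≤ n` and all
`y ≠ 0` whose logarithmic derivative lies in `E`. -/
def iterateDerivDivSpan (E : Submodule (constantSubfield L) L) :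
    ℕ → Submodule (constantSubfield L) L
  | 0 => 1
  | n + 1 => iterateDerivDivSpan E n ⊔ ((iterateDerivDivSpan E n).map
      (constantLinearDeriv L).toLinearMap ⊔ iterateDerivDivSpan E n * E)

variable {E : Submodule (constantSubfield L) L}

theorem iterateDerivDivSpan_fg (hE : E.FG) (n : ℕ) : (iterateDerivDivSpan E n).FG := by
  induction n with
  | zero =>
    rw [iterateDerivDivSpan, Submodule.one_eq_span]
    exact Submodule.fg_span_singleton _
  | succ n ih => exact ih.sup ((ih.map _).sup (ih.mul hE))

theorem iterateDerivDivSpan_mono : Monotone (iterateDerivDivSpan E) :=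
  monotone_nat_of_le_succ fun _ ↦ le_sup_left

theorem one_mem_iterateDerivDivSpan (n : ℕ) : 1 ∈ iterateDerivDivSpan E n :=
  iterateDerivDivSpan_mono (Nat.zero_le n) (Submodule.one_le.1 le_rfl)

theorem iterate_deriv_div_mem {y : L} (hy : y ≠ 0) (hyE : Differential.logDeriv y ∈ E) (n : ℕ) :
    Differential.deriv^[n] y / y ∈ iterateDerivDivSpan E n := by
  induction n with
  | zero => simpa [hy] using one_mem_iterateDerivDivSpan 0
  | succ n ih =>
    set m := Differential.deriv^[n] y / y with hm
    have quotient_rule : Differential.deriv^[n + 1] y / y = m′ + m * Differential.logDeriv y := by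
      rw [Function.iterate_succ_apply', (eq_div_iff hy).1 hm |>.symm, Derivation.leibniz,
        Differential.logDeriv]
      simp only [smul_eq_mul]
      field_simp
      ring
    rw [quotient_rule]
    exact Submodule.mem_sup_right
      (Submodule.add_mem_sup ⟨m, ih, rfl⟩ (Submodule.mul_mem_mul ih hyE))

theorem prod_mem_submodule_pow {R A ι : Type*} [CommSemiring R] [CommSemiring A] [Algebra R A]
    {G : Submodule R A} {s : Finset ι} {f : ι → A} (hf : ∀ i ∈ s, f i ∈ G) :
    ∏ i ∈ s, f i ∈ G ^ s.card := by
  classical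
  induction s using Finset.induction_on with
  | empty => simp [Submodule.one_le.1 le_rfl]
  | insert a s ha ih =>
    rw [Finset.prod_insert ha, Finset.card_insert_of_notMem ha, pow_succ']
    exact Submodule.mul_mem_mul (hf a (Finset.mem_insert_self a s))
      (ih fun i hi ↦ hf i (Finset.mem_insert_of_mem hi))

theorem det_mem_submodule_pow {R A n : Type*} [CommRing R] [CommRing A] [Algebra R A] [Fintype n]
    [DecidableEq n] {G : Submodule R A} {M : Matrix n n A} (hM : ∀ i j, M i j ∈ G) :
    M.det ∈ G ^ Fintype.card n := by
  rw [Matrix.det_apply]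
  exact Submodule.sum_mem _ fun σ _ ↦
    Submodule.smul_of_tower_mem _ _ (prod_mem_submodule_pow fun i _ ↦ hM (σ i) i)

theorem det_mul_apply_eq_det_updateCol_mulVec {R n : Type*} [CommRing R] [Fintype n]
    [DecidableEq n] (M : Matrix n n R) (y : n → R) (p : n) :
    M.det * y p = (M.updateCol p (M.mulVec y)).det := by
  rw [← Matrix.cramer_apply, Matrix.cramer_eq_adjugate_mulVec, Matrix.mulVec_mulVec,
    Matrix.adjugate_mul, Matrix.smul_mulVec, Matrix.one_mulVec, Pi.smul_apply, smul_eq_mul]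

/-- The Wronskian matrix of `y` with every column divided by its top entry. Its entries, unlike
those of the Wronskian, lie in a space that depends only on the logarithmic derivatives of `y`. -/
def normalizedWronskian {n : ℕ} (y : Fin n → L) : Matrix (Fin n) (Fin n) L :=
  Matrix.of fun a q ↦ Differential.deriv^[a] (y q) / y q

theorem det_normalizedWronskian_ne_zero {n : ℕ} {y : Fin n → L} (hy : ∀ q, y q ≠ 0)
    (hindep : LinearIndependent (constantSubfield L) y) : (normalizedWronskian y).det ≠ 0 := by
  intro hdet
  obtain ⟨v, hv, hMv⟩ := Matrix.exists_mulVec_eq_zero_iff.2 hdet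
  have hcoeff := coeff_eq_zero_of_sum_mul_iterate_deriv_eq_zero hindep
    (s := Finset.univ) (n := n) (by simp) (c := fun q ↦ v q / y q) fun a ha ↦ by
      refine Eq.trans ?_ (congrFun hMv ⟨a, ha⟩)
      exact Finset.sum_congr rfl fun q _ ↦ by simp only [normalizedWronskian, Matrix.of_apply]; ring
  exact hv (funext fun q ↦ by simpa [hy q] using hcoeff q (Finset.mem_univ q))

theorem normalizedWronskian_mulVec_self {n : ℕ} {y : Fin n → L} (hy : ∀ q, y q ≠ 0) (a : Fin n) :
    (normalizedWronskian y).mulVec y a = Differential.deriv^[a] (∑ q, y q) := by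
  simp only [Matrix.mulVec, dotProduct, normalizedWronskian, Matrix.of_apply,
    div_mul_cancel₀ _ (hy _)]
  rw [← Derivation.coeFn_coe, ← Module.End.coe_pow, map_sum]

theorem iterate_deriv_one_mem {G : Submodule (constantSubfield L) L} (hG : 1 ∈ G) (a : ℕ) :
    Differential.deriv^[a] (1 : L) ∈ G := by
  cases a with
  | zero => exact hG
  | succ a => simp [Function.iterate_succ_apply, iterate_map_zero]

-- Cramer's rule for the normalized Wronskian, whose entries lie in `iterateDerivDivSpan E n`.
theorem exists_fg_submodule_eq_div (hE : E.FG) (n : ℕ) :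
    ∃ G : Submodule (constantSubfield L) L, G.FG ∧
      ∀ y : Fin n → L, (∀ p, y p ≠ 0) → (∀ p, Differential.logDeriv (y p) ∈ E) → ∑ p, y p = 1 →
        LinearIndependent (constantSubfield L) y →
        ∀ p, ∃ u ∈ (G : Set L) \ {0}, ∃ v ∈ (G : Set L) \ {0}, y p = u / v := by
  let G := iterateDerivDivSpan E n
  refine ⟨G ^ n, (iterateDerivDivSpan_fg hE n).pow n, fun y hy0 hyE hsum hindep p ↦ ?_⟩
  let M := normalizedWronskian y
  have hM (a q) : M a q ∈ G :=
    iterateDerivDivSpan_mono a.2.le (iterate_deriv_div_mem (hy0 q) (hyE q) a)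
  have hM' (a q) : M.updateCol p (M.mulVec y) a q ∈ G := by
    rw [Matrix.updateCol_apply, normalizedWronskian_mulVec_self hy0, hsum]
    split_ifs
    exacts [iterate_deriv_one_mem (one_mem_iterateDerivDivSpan n) a, hM a q]
  have hdet : M.det ≠ 0 := det_normalizedWronskian_ne_zero hy0 hindep
  have cramer := det_mul_apply_eq_det_updateCol_mulVec M y p
  refine ⟨_, ⟨by simpa using det_mem_submodule_pow hM', ?_⟩, M.det,
    ⟨by simpa using det_mem_submodule_pow hM, hdet⟩, ?_⟩
  · exact cramer ▸ mul_ne_zero hdet (hy0 p)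
  · rw [← cramer, mul_div_cancel_left₀ _ hdet]

end Wronskian

/-! ### Minimal dependences in differential fields -/

section MinimalDependence

theorem exists_relation_ne_zero_of_minimal {K V κ : Type*} [Field K] [AddCommGroup V] [Module K V]
    {y : κ → V} {T : Finset κ} (hT : Minimal (fun T : Finset κ ↦ ¬ LinearIndepOn K y T) T) :
    ∃ c : κ → K, (∀ p ∈ T, c p ≠ 0) ∧ ∑ p ∈ T, c p • y p = 0 := by
  classical
  have hdep := hT.prop
  simp only [linearIndepOn_finset_iff, not_forall] at hdep
  obtain ⟨c, hsum, q, hq, hcq⟩ := hdep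
  refine ⟨c, fun p hp hcp ↦ hcq ?_, hsum⟩
  have hindep := not_not.1 (hT.not_prop_of_lt (Finset.erase_ssubset hp))
  refine linearIndepOn_finset_iff.1 hindep c ?_ q (Finset.mem_erase.2 ⟨fun h ↦ hcq (h ▸ hcp), hq⟩)
  rwa [Finset.sum_erase T (by simp [hcp])]

section

variable {K L κ : Type*} [Field K] [Field L] [Algebra K L] [DecidableEq κ] {y : κ → L}
  {T : Finset κ} {p : κ}

theorem exists_sum_erase_smul_div_eq_one
    (hT : Minimal (fun T : Finset κ ↦ ¬ LinearIndepOn K y T) T) (hp : p ∈ T) (hyp : y p ≠ 0) :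
    ∃ k : κ → K, (∀ r ∈ T, k r ≠ 0) ∧ ∑ r ∈ T.erase p, k r • (y r / y p) = 1 := by
  obtain ⟨c, hc0, hrel⟩ := exists_relation_ne_zero_of_minimal hT
  refine ⟨fun r ↦ -(c p)⁻¹ * c r,
    fun r hr ↦ mul_ne_zero (neg_ne_zero.2 (inv_ne_zero (hc0 p hp))) (hc0 r hr), ?_⟩
  have hrest := eq_neg_of_add_eq_zero_right ((Finset.add_sum_erase T _ hp).trans hrel)
  calc ∑ r ∈ T.erase p, (-(c p)⁻¹ * c r) • (y r / y p)
      = -(c p)⁻¹ • ((∑ r ∈ T.erase p, c r • y r) / y p) := by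
        simp only [mul_smul, Finset.sum_div, Finset.smul_sum, smul_div_assoc]
    _ = 1 := by
        rw [hrest, neg_div, smul_neg, neg_smul, neg_neg, smul_div_assoc, div_self hyp,
          inv_smul_smul₀ (hc0 p hp)]

theorem linearIndependent_erase_smul_div {k : κ → K}
    (hT : Minimal (fun T : Finset κ ↦ ¬ LinearIndepOn K y T) T) (hp : p ∈ T) (hyp : y p ≠ 0)
    (hk : ∀ r ∈ T, k r ≠ 0) : LinearIndependent K fun r : T.erase p ↦ k r • (y r / y p) := by
  have hindep : LinearIndependent K fun r : T.erase p ↦ y r :=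
    not_not.1 (hT.not_prop_of_lt (Finset.erase_ssubset hp))
  have hinj : Function.Injective (LinearMap.mulRight K (y p)⁻¹) :=
    mul_left_injective₀ (inv_ne_zero hyp)
  have hdiv : LinearIndependent K fun r : T.erase p ↦ y r / y p := by
    simp only [div_eq_mul_inv]
    exact hindep.map' _ (LinearMap.ker_eq_bot.2 hinj)
  exact hdiv.units_smul fun r ↦ Units.mk0 (k r) (hk r (Finset.mem_of_mem_erase r.2))

end

variable {L : Type*} [Field L] [Differential L] {E : Submodule (constantSubfield L) L}

theorem exists_fg_submodule_smul_div_eq_div (hE : E.FG) {κ : Type*} {T : Finset κ} {p q : κ}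
    (hp : p ∈ T) (hq : q ∈ T) (hqp : q ≠ p) :
    ∃ G : Submodule (constantSubfield L) L, G.FG ∧
      ∀ y : κ → L, Minimal (fun T : Finset κ ↦ ¬ LinearIndepOn (constantSubfield L) y T) T →
        (∀ r ∈ T, y r ≠ 0) → (∀ r ∈ T, Differential.logDeriv (y r / y p) ∈ E) →
        ∃ c : constantSubfield L, c ≠ 0 ∧
          ∃ u ∈ (G : Set L) \ {0}, ∃ v ∈ (G : Set L) \ {0}, c • (y q / y p) = u / v := by
  classical
  obtain ⟨G, hG, hquot⟩ := exists_fg_submodule_eq_div hE (T.erase p).card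
  refine ⟨G, hG, fun y hT hy0 hyE ↦ ?_⟩
  obtain ⟨k, hk0, hsum⟩ := exists_sum_erase_smul_div_eq_one hT hp (hy0 p hp)
  let Y (r : T.erase p) : L := k r • (y r / y p)
  have hrT (r : T.erase p) : (r : κ) ∈ T := Finset.mem_of_mem_erase r.2
  have hkL (r : T.erase p) : (k r : L) ≠ 0 := by simpa using hk0 r (hrT r)
  have hy_div (r : T.erase p) : y r / y p ≠ 0 := div_ne_zero (hy0 r (hrT r)) (hy0 p hp)
  have hYE (r : T.erase p) : Differential.logDeriv (Y r) ∈ E := by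
    have hk : Differential.logDeriv (k r : L) = 0 := (Differential.logDeriv_eq_zero _).2 (k r).2
    change Differential.logDeriv ((k r : L) * (y r / y p)) ∈ E
    rw [Differential.logDeriv_mul _ _ (hkL r) (hy_div r), hk, zero_add]
    exact hyE r (hrT r)
  have hYsum : ∑ r, Y r = 1 := by
    rwa [Finset.univ_eq_attach, Finset.sum_attach (T.erase p) fun r ↦ k r • (y r / y p)]
  let e := (T.erase p).equivFin
  let q' : T.erase p := ⟨q, Finset.mem_erase.2 ⟨hqp, hq⟩⟩
  have := hquot (Y ∘ e.symm) (fun j ↦ mul_ne_zero (hkL _) (hy_div _)) (fun j ↦ hYE _)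
    ((Equiv.sum_comp e.symm Y).trans hYsum)
    ((linearIndependent_erase_smul_div hT hp (hy0 p hp) hk0).comp _ e.symm.injective) (e q')
  rw [Function.comp_apply, e.symm_apply_apply] at this
  exact ⟨k q, hk0 q hq, this⟩

theorem finite_valuation_image_div_of_minimal (hE : E.FG) {α κ : Type*} {T : Finset κ} {p q : κ}
    (hp : p ∈ T) (hq : q ∈ T) (hqp : q ≠ p) {S : Set α} {y : α → κ → L}
    (hT : ∀ z ∈ S, Minimal (fun T : Finset κ ↦ ¬ LinearIndepOn (constantSubfield L) (y z) T) T)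
    (hy0 : ∀ z ∈ S, ∀ r ∈ T, y z r ≠ 0)
    (hyE : ∀ z ∈ S, ∀ r ∈ T, Differential.logDeriv (y z r / y z p) ∈ E)
    {Γ : Type*} [LinearOrderedCommGroupWithZero Γ] (v : Valuation L Γ)
    [v.IsTrivialOn (constantSubfield L)] :
    ((fun z ↦ v (y z q / y z p)) '' S).Finite := by
  obtain ⟨G, hG, hquot⟩ := exists_fg_submodule_smul_div_eq_div hE hp hq hqp
  have hfin := finite_valuation_image_of_fg v hG
  refine (hfin.image2 (· / ·) hfin).subset ?_
  rintro _ ⟨z, hz, rfl⟩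
  obtain ⟨c, hc, u, hu, u', hu', heq⟩ := hquot (y z) (hT z hz) (hy0 z hz) (hyE z hz)
  refine ⟨v u, mem_image_of_mem v hu, v u', mem_image_of_mem v hu', ?_⟩
  simp only [← map_div₀, ← heq, Algebra.smul_def, map_mul v, Valuation.IsTrivialOn.eq_one _ hc,
    one_mul]

end MinimalDependence

/-! ### Relations between exponentials over a finite-dimensional space of constants -/

section ExponentialRelations

theorem exists_infinite_subset_minimal_not_linearIndepOn {K V α κ : Type*} [Field K]
    [AddCommGroup V] [Module K V] {y : α → κ → V} {S : Set α} (hS : S.Infinite) {T₀ : Finset κ}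
    (hdep : ∀ z ∈ S, ¬ LinearIndepOn K (y z) T₀) :
    ∃ T ⊆ T₀, ∃ S' ⊆ S, S'.Infinite ∧
      ∀ z ∈ S', Minimal (fun T : Finset κ ↦ ¬ LinearIndepOn K (y z) T) T := by
  have hex : ∀ z ∈ S, ∃ T ≤ T₀, Minimal (fun T : Finset κ ↦ ¬ LinearIndepOn K (y z) T) T :=
    fun z hz ↦ exists_minimal_le_of_wellFoundedLT _ _ (hdep z hz)
  choose! T hT₀ hTmin using hex
  have hTfin : (T '' S).Finite := T₀.powerset.finite_toSet.subset
    (image_subset_iff.2 fun z hz ↦ Finset.mem_coe.2 (Finset.mem_powerset.2 (hT₀ z hz)))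
  obtain ⟨T₁, hS₁⟩ := infinite_inter_fiber_of_finite_image hS hTfin
  obtain ⟨z₀, hz₀, rfl⟩ := hS₁.nonempty
  refine ⟨T z₀, hT₀ z₀ hz₀, _, inter_subset_left, hS₁, ?_⟩
  rintro z ⟨hz, heq : T z = T z₀⟩
  exact heq ▸ hTmin z hz

section

variable {K L ι κ : Type*} [Field K] [Field L] [Algebra K L] {x : ι → L}

theorem not_linearIndepOn_basis_mul [Fintype κ] {E : Submodule K L} (b : Module.Basis κ K E)
    {B : Finset ι} {e : ι → L} (he : ∀ i ∈ B, e i ∈ E) (hne : ∃ i ∈ B, e i ≠ 0)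
    (hsum : ∑ i ∈ B, e i * x i = 0) :
    ¬ LinearIndepOn K (fun p : ι × κ ↦ (b p.2 : L) * x p.1)
      (B ×ˢ Finset.univ : Finset (ι × κ)) := by
  classical
  intro hindep
  let e' (i : ι) : E := if h : i ∈ B then ⟨e i, he i h⟩ else 0
  have coe_e' : ∀ i ∈ B, ∑ s, b.repr (e' i) s • (b s : L) = e i := fun i hi ↦ by
    have hval : E.subtype (e' i) = e i := congrArg E.subtype (dif_pos hi)
    have hrepr := congrArg E.subtype (b.sum_repr (e' i))
    rwa [hval, map_sum] at hrepr
  have hcoeff := linearIndepOn_finset_iff.1 hindep (fun p ↦ b.repr (e' p.1) p.2) <| by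
    rw [← hsum, Finset.sum_product]
    refine Finset.sum_congr rfl fun i hi ↦ ?_
    simp only [← smul_mul_assoc, ← Finset.sum_mul, coe_e' i hi]
  obtain ⟨i, hi, hei⟩ := hne
  refine hei ?_
  rw [← coe_e' i hi]
  exact Finset.sum_eq_zero fun s _ ↦ by rw [hcoeff (i, s) (by simp [hi]), zero_smul]

theorem exists_fst_ne_of_not_linearIndepOn_mul {ε : κ → L} (hε : LinearIndependent K ε)
    (hx : ∀ i, x i ≠ 0) {T : Finset (ι × κ)}
    (hT : ¬ LinearIndepOn K (fun p : ι × κ ↦ ε p.2 * x p.1) T) :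
    ∃ p ∈ T, ∃ q ∈ T, q.1 ≠ p.1 := by
  by_contra! heq
  refine hT ?_
  obtain rfl | ⟨p, hp⟩ := T.eq_empty_or_nonempty
  · simp
  have hinj : Function.Injective fun q : T ↦ (q : ι × κ).2 := fun q r hqr ↦
    Subtype.ext (Prod.ext (heq _ r.2 _ q.2) hqr)
  have hmul : Function.Injective (LinearMap.mulRight K (x p.1)) := mul_left_injective₀ (hx p.1)
  have hfun : (fun q : T ↦ ε (q : ι × κ).2 * x (q : ι × κ).1) = fun q : T ↦
      ε (q : ι × κ).2 * x p.1 := funext fun q ↦ by rw [heq p hp q q.2]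
  change LinearIndependent K fun q : T ↦ ε (q : ι × κ).2 * x (q : ι × κ).1
  rw [hfun]
  exact (hε.comp _ hinj).map' _ (LinearMap.ker_eq_bot.2 hmul)

end

variable [Differential ℂ]

/-- The logarithmic derivative of `exp w`, as a rational-linear function of `w`. -/
def expLogDeriv : ℂ →ₗ[ℚ] ℂ :=
  (AddMonoidHom.mk' (fun w ↦ Differential.logDeriv (exp w)) fun a b ↦ by
    rw [exp_add, Differential.logDeriv_mul _ _ (exp_ne_zero a) (exp_ne_zero b)]).toRatLinearMap

theorem expLogDeriv_apply (w : ℂ) : expLogDeriv w = Differential.logDeriv (exp w) := rfl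

theorem expLogDeriv_eq_zero {w : ℂ} : expLogDeriv w = 0 ↔ exp w ∈ constantSubfield ℂ :=
  Differential.logDeriv_eq_zero _

/-- The space over the constants spanned by the logarithmic derivatives of the `ε s` and of the
exponentials of `W`. -/
def logDerivSpan {κ : Type*} (ε : κ → ℂ) (W : Submodule ℚ ℂ) : Submodule (constantSubfield ℂ) ℂ :=
  Submodule.span _ (range fun s ↦ Differential.logDeriv (ε s)) ⊔
    Submodule.span _ (W.map expLogDeriv : Submodule ℚ ℂ)

theorem logDerivSpan_fg {κ : Type*} [Finite κ] (ε : κ → ℂ) (W : Submodule ℚ ℂ)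
    [FiniteDimensional ℚ W] : (logDerivSpan ε W).FG := by
  obtain ⟨t, ht⟩ := (Module.Finite.iff_fg.1 ‹FiniteDimensional ℚ W›).map expLogDeriv
  rw [logDerivSpan, ← ht, Submodule.span_span_of_tower]
  exact (Submodule.fg_span (finite_range _)).sup (Submodule.fg_span t.finite_toSet)

theorem logDeriv_mul_exp_div_mem_logDerivSpan {κ : Type*} {ε : κ → ℂ} {W : Submodule ℚ ℂ}
    (hε : ∀ s, ε s ≠ 0) {a b : ℂ} (hab : a - b ∈ W) (s t : κ) :
    Differential.logDeriv (ε s * exp a / (ε t * exp b)) ∈ logDerivSpan ε W := by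
  rw [mul_div_mul_comm, ← exp_sub, Differential.logDeriv_mul _ _ (div_ne_zero (hε s) (hε t))
    (exp_ne_zero _), Differential.logDeriv_div _ _ (hε s) (hε t), ← expLogDeriv_apply]
  exact Submodule.add_mem_sup
    (Submodule.sub_mem _ (Submodule.subset_span ⟨s, rfl⟩) (Submodule.subset_span ⟨t, rfl⟩))
    (Submodule.subset_span ⟨_, hab, rfl⟩)

variable {ι α : Type*} (W : Submodule ℚ ℂ) [FiniteDimensional ℚ W]
  {E : Submodule (constantSubfield ℂ) ℂ} {B : Finset ι} {S : Set α} {e w : ι → α → ℂ}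

theorem finite_valuation_image_exp_sub {κ : Type*} [Finite κ] {ε : κ → ℂ} (hε : ∀ s, ε s ≠ 0)
    {T : Finset (ι × κ)} {p q : ι × κ} (hp : p ∈ T) (hq : q ∈ T) (hqp : q ≠ p)
    (hT : ∀ z ∈ S, Minimal (fun T : Finset (ι × κ) ↦ ¬ LinearIndepOn (constantSubfield ℂ)
      (fun r : ι × κ ↦ ε r.2 * exp (w r.1 z)) T) T)
    (hw : ∀ r ∈ T, ∀ z ∈ S, w r.1 z - w p.1 z ∈ W) {Γ : Type*} [LinearOrderedCommGroupWithZero Γ]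
    (v : Valuation ℂ Γ) [v.IsTrivialOn (constantSubfield ℂ)] :
    ((fun z ↦ v (exp (w q.1 z - w p.1 z))) '' S).Finite := by
  have hfin := finite_valuation_image_div_of_minimal (logDerivSpan_fg ε W) hp hq hqp hT
    (fun z _ r _ ↦ mul_ne_zero (hε r.2) (exp_ne_zero _))
    (fun z hz r hr ↦ logDeriv_mul_exp_div_mem_logDerivSpan hε (hw r hr z hz) _ _) v
  refine (hfin.image (· * v (ε p.2 / ε q.2))).subset ?_
  rw [image_image]
  refine (image_congr fun z _ ↦ ?_).subset
  rw [← map_mul, mul_div_mul_comm, ← exp_sub, mul_right_comm, div_mul_div_cancel₀ (hε p.2),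
    div_self (hε q.2), one_mul]

theorem exists_pair_exp_sub_mem_constantSubfield (hE : E.FG) (hS : S.Infinite)
    (he : ∀ i ∈ B, ∀ z ∈ S, e i z ∈ E) (hw : ∀ i ∈ B, ∀ j ∈ B, ∀ z ∈ S, w i z - w j z ∈ W)
    (hne : ∀ z ∈ S, ∃ i ∈ B, e i z ≠ 0) (hsum : ∀ z ∈ S, ∑ i ∈ B, e i z * exp (w i z) = 0) :
    ∃ i ∈ B, ∃ j ∈ B, j ≠ i ∧ ∃ S' ⊆ S, S'.Infinite ∧ ∀ z ∈ S', ∀ z' ∈ S',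
      exp ((w j z - w i z) - (w j z' - w i z')) ∈ constantSubfield ℂ := by
  have : FiniteDimensional (constantSubfield ℂ) E := Module.Finite.iff_fg.2 hE
  let b := Module.finBasis (constantSubfield ℂ) E
  have hε : LinearIndependent (constantSubfield ℂ) fun s ↦ (b s : ℂ) :=
    b.linearIndependent.map' E.subtype (by simp)
  obtain ⟨T, hTB, S₁, hS₁, hS₁inf, hT⟩ := exists_infinite_subset_minimal_not_linearIndepOn hS
    fun z hz ↦ not_linearIndepOn_basis_mul b (he · · z hz) (hne z hz) (hsum z hz)
  obtain ⟨z₀, hz₀⟩ := hS₁inf.nonempty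
  obtain ⟨p, hp, q, hq, hpq⟩ := exists_fst_ne_of_not_linearIndepOn_mul hε
    (fun i ↦ exp_ne_zero (w i z₀)) (hT z₀ hz₀).prop
  have fst_mem : ∀ r ∈ T, r.1 ∈ B := fun r hr ↦ (Finset.mem_product.1 (hTB hr)).1
  have hw₁ : ∀ r ∈ T, ∀ z ∈ S₁, w r.1 z - w p.1 z ∈ W := fun r hr z hz ↦
    hw _ (fst_mem r hr) _ (fst_mem p hp) z (hS₁ hz)
  refine ⟨p.1, fst_mem p hp, q.1, fst_mem q hq, hpq, ?_⟩
  obtain ⟨S', hS', hS'inf, hS'K⟩ := exists_infinite_subset_exp_sub_mem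
    (fun _ ↦ mem_constantSubfield_of_isAlgebraic) W hS₁inf (ψ := fun z ↦ w q.1 z - w p.1 z)
    (fun z hz z' hz' ↦ W.sub_mem (hw₁ q hq z hz) (hw₁ q hq z' hz')) fun A hA ↦ by
      have := isTrivialOn_of_algebraMap_mem (K := constantSubfield ℂ) fun c ↦ hA c c.2
      exact finite_valuation_image_exp_sub W hε.ne_zero hp hq (fun h ↦ hpq (congrArg Prod.fst h))
        hT hw₁ A.valuation
  exact ⟨S', hS'.trans hS₁, hS'inf, hS'K⟩

end ExponentialRelations

section

variable {ι M : Type*} [AddCommMonoid M] {B : Finset ι} {w : ι → M}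

/-- A nonempty finite sum that vanishes although none of its proper nonempty subsums does. -/
def IsMinimalVanishing (B : Finset ι) (w : ι → M) : Prop :=
  B.Nonempty ∧ ∑ i ∈ B, w i = 0 ∧ ∀ A ⊆ B, A.Nonempty → A ≠ B → ∑ i ∈ A, w i ≠ 0

theorem IsMinimalVanishing.ne_zero (h : IsMinimalVanishing B w) (hB : 2 ≤ B.card) {i : ι}
    (hi : i ∈ B) : w i ≠ 0 := by
  have hproper : {i} ≠ B := by
    rintro rfl
    simp at hB
  simpa using h.2.2 {i} (by simpa using hi) (by simp) hproper

theorem IsMinimalVanishing.eq_of_sum_filter_eq_zero {κ : Type*} [DecidableEq κ]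
    (h : IsMinimalVanishing B w) {m : ι → κ}
    (hm : ∀ k, ∑ i ∈ B with m i = k, w i = 0) {i j : ι} (hi : i ∈ B) (hj : j ∈ B) : m i = m j := by
  have hall : {k ∈ B | m k = m j} = B := by
    by_contra hne
    exact h.2.2 _ (Finset.filter_subset _ _) ⟨j, by simp [hj]⟩ hne (hm _)
  exact Finset.filter_eq_self.1 hall i hi

theorem IsMinimalVanishing.merge [DecidableEq ι] (h : IsMinimalVanishing B w) {w' : ι → M}
    {i j : ι} (hi : i ∈ B) (hj : j ∈ B) (hji : j ≠ i)
    (hw' : ∀ k ∈ B, k ≠ i → k ≠ j → w' k = w k) (hi' : w' i = w i + w j) :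
    IsMinimalVanishing (B.erase j) w' := by
  have sum_notMem : ∀ A ⊆ B.erase j, i ∉ A → ∑ k ∈ A, w' k = ∑ k ∈ A, w k := fun A hA hiA ↦
    Finset.sum_congr rfl fun k hk ↦ hw' k (Finset.mem_of_mem_erase (hA hk))
      (ne_of_mem_of_not_mem hk hiA) (Finset.ne_of_mem_erase (hA hk))
  have sum_mem : ∀ A ⊆ B.erase j, i ∈ A → ∑ k ∈ A, w' k = ∑ k ∈ insert j A, w k := fun A hA hiA ↦ by
    rw [Finset.sum_insert fun hjA ↦ Finset.notMem_erase j B (hA hjA),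
      ← Finset.add_sum_erase A w' hiA, ← Finset.add_sum_erase A w hiA, hi',
      sum_notMem _ ((Finset.erase_subset i A).trans hA) (Finset.notMem_erase i A)]
    abel
  have hiB : i ∈ B.erase j := Finset.mem_erase.2 ⟨hji.symm, hi⟩
  refine ⟨⟨i, hiB⟩, ?_, fun A hA hAne hAB ↦ ?_⟩
  · rw [sum_mem _ le_rfl hiB, Finset.insert_erase hj]
    exact h.2.1
  have hjA : j ∉ A := fun hjA ↦ Finset.notMem_erase j B (hA hjA)
  have hAB' : A ⊆ B := hA.trans (Finset.erase_subset _ _)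
  by_cases hiA : i ∈ A
  · rw [sum_mem A hA hiA]
    refine h.2.2 _ (Finset.insert_subset hj hAB') (Finset.insert_nonempty _ _) fun heq ↦ hAB ?_
    rw [← heq, Finset.erase_insert hjA]
  · rw [sum_notMem A hA hiA]
    exact h.2.2 A hAB' hAne fun heq ↦ hiA (heq ▸ hi)

end

section

variable [Differential ℂ] {ι α : Type*} (W : Submodule ℚ ℂ) [FiniteDimensional ℚ W]

theorem exp_sub_mem_constantSubfield_of_pivot {w : ι → α → ℂ} {B : Finset ι} {i : ι} {z z' : α}
    (h : ∀ k ∈ B, exp ((w k z - w i z) - (w k z' - w i z')) ∈ constantSubfield ℂ) :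
    ∀ k ∈ B, ∀ l ∈ B, exp ((w k z - w l z) - (w k z' - w l z')) ∈ constantSubfield ℂ := by
  intro k hk l hl
  convert! (constantSubfield ℂ).div_mem (h k hk) (h l hl) using 1
  rw [← exp_sub]
  congr 1
  ring

-- Since `exp (w j z - w i z)` is a constant times a fixed number, the `j`-th term can be absorbed
-- into the coefficient of the `i`-th one.
theorem exists_isMinimalVanishing_erase [DecidableEq ι] {w : ι → α → ℂ} {B : Finset ι}
    {E : Submodule (constantSubfield ℂ) ℂ} (hE : E.FG) {S : Set α} (hS : S.Nonempty)
    {e : ι → α → ℂ} (he : ∀ i ∈ B, ∀ z ∈ S, e i z ∈ E)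
    (hmin : ∀ z ∈ S, IsMinimalVanishing B fun i ↦ e i z * exp (w i z)) {i j : ι} (hi : i ∈ B)
    (hj : j ∈ B) (hji : j ≠ i) (hK : ∀ z ∈ S, ∀ z' ∈ S,
      exp ((w j z - w i z) - (w j z' - w i z')) ∈ constantSubfield ℂ) :
    ∃ (E' : Submodule (constantSubfield ℂ) ℂ) (e' : ι → α → ℂ), E'.FG ∧
      (∀ k ∈ B.erase j, ∀ z ∈ S, e' k z ∈ E') ∧
      ∀ z ∈ S, IsMinimalVanishing (B.erase j) fun k ↦ e' k z * exp (w k z) := by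
  obtain ⟨z₀, hz₀⟩ := hS
  let ρ := exp (w j z₀ - w i z₀)
  let e' (k : ι) (z : α) := if k = i then e i z + e j z * exp (w j z - w i z) else e k z
  refine ⟨E ⊔ E.map (LinearMap.mulLeft (constantSubfield ℂ) ρ), e', hE.sup (hE.map _),
    fun k hk z hz ↦ ?_, fun z hz ↦ ?_⟩
  · by_cases hki : k = i
    · simp only [e', if_pos hki]
      refine Submodule.add_mem_sup (he i hi z hz)
        ⟨(⟨_, hK z hz z₀ hz₀⟩ : constantSubfield ℂ) • e j z, E.smul_mem _ (he j hj z hz), ?_⟩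
      change ρ * (exp ((w j z - w i z) - (w j z₀ - w i z₀)) * e j z) = _
      rw [← mul_assoc, ← exp_add, add_sub_cancel, mul_comm]
    · simpa only [e', if_neg hki] using
        Submodule.mem_sup_left (he k (Finset.mem_of_mem_erase hk) z hz)
  · refine (hmin z hz).merge hi hj hji (fun k _ hki _ ↦ by simp [e', hki]) ?_
    simp only [e', if_pos, add_mul, mul_assoc, ← exp_add, sub_add_cancel]

theorem exists_infinite_subset_exp_sub_mem_constantSubfield (w : ι → α → ℂ) {B : Finset ι}
    {E : Submodule (constantSubfield ℂ) ℂ} (hE : E.FG) {S : Set α} (hS : S.Infinite)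
    {e : ι → α → ℂ} (he : ∀ i ∈ B, ∀ z ∈ S, e i z ∈ E)
    (hw : ∀ i ∈ B, ∀ j ∈ B, ∀ z ∈ S, w i z - w j z ∈ W)
    (hmin : ∀ z ∈ S, IsMinimalVanishing B fun i ↦ e i z * exp (w i z)) :
    ∃ S' ⊆ S, S'.Infinite ∧ ∀ z ∈ S', ∀ z' ∈ S', ∀ i ∈ B, ∀ j ∈ B,
      exp ((w i z - w j z) - (w i z' - w j z')) ∈ constantSubfield ℂ := by
  classical
  induction hn : B.card using Nat.strong_induction_on generalizing B E S e with
  | _ n ih =>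
  obtain hB | hB := Nat.lt_or_ge B.card 2
  · refine ⟨S, le_rfl, hS, fun z _ z' _ i hi j hj ↦ ?_⟩
    rw [Finset.card_le_one.1 (Nat.le_of_lt_succ hB) i hi j hj]
    simp
  obtain ⟨i₀, hi₀⟩ : B.Nonempty := Finset.card_pos.1 (by lia)
  obtain ⟨i, hi, j, hj, hji, S₁, hS₁, hS₁inf, hS₁K⟩ :=
    exists_pair_exp_sub_mem_constantSubfield W hE hS he hw
      (fun z hz ↦ ⟨i₀, hi₀, left_ne_zero_of_mul ((hmin z hz).ne_zero hB hi₀)⟩)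
      (fun z hz ↦ (hmin z hz).2.1)
  obtain ⟨E', e', hE', he', hmin'⟩ := exists_isMinimalVanishing_erase hE hS₁inf.nonempty
    (fun k hk z hz ↦ he k hk z (hS₁ hz)) (fun z hz ↦ hmin z (hS₁ hz)) hi hj hji hS₁K
  obtain ⟨S', hS', hS'inf, hS'K⟩ := ih _ (hn ▸ Finset.card_erase_lt_of_mem hj)
    hE' hS₁inf he'
    (fun k hk l hl z hz ↦
      hw k (Finset.mem_of_mem_erase hk) l (Finset.mem_of_mem_erase hl) z (hS₁ hz)) hmin' rfl
  refine ⟨S', hS'.trans hS₁, hS'inf, fun z hz z' hz' ↦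
    exp_sub_mem_constantSubfield_of_pivot (i := i) fun k hk ↦ ?_⟩
  obtain rfl | hkj := eq_or_ne k j
  · exact hS₁K z (hS' hz) z' (hS' hz')
  · exact hS'K z hz z' hz' k (Finset.mem_erase.2 ⟨hkj, hk⟩) i (Finset.mem_erase.2 ⟨hji.symm, hi⟩)

end

/-- The rational span of the numbers `(wᵢ z - wⱼ z) - (wᵢ z' - wⱼ z')` for `i, j ∈ B` and
`z, z' ∈ S`. -/
def differenceSpan {ι α : Type*} (w : ι → α → ℂ) (B : Finset ι) (S : Set α) : Submodule ℚ ℂ :=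
  Submodule.span ℚ {x | ∃ z ∈ S, ∃ z' ∈ S, ∃ i ∈ B, ∃ j ∈ B,
    (w i z - w j z) - (w i z' - w j z') = x}

section

variable {ι α : Type*} {w : ι → α → ℂ} {B : Finset ι} {S : Set α}

theorem differenceSpan_le {W : Submodule ℚ ℂ} : differenceSpan w B S ≤ W ↔
    ∀ z ∈ S, ∀ z' ∈ S, ∀ i ∈ B, ∀ j ∈ B, (w i z - w j z) - (w i z' - w j z') ∈ W := by
  rw [differenceSpan, Submodule.span_le]
  refine ⟨fun h z hz z' hz' i hi j hj ↦ h ⟨z, hz, z', hz', i, hi, j, hj, rfl⟩, ?_⟩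
  rintro h _ ⟨z, hz, z', hz', i, hi, j, hj, rfl⟩
  exact h z hz z' hz' i hi j hj

theorem differenceSpan_mono {S' : Set α} (h : S' ⊆ S) :
    differenceSpan w B S' ≤ differenceSpan w B S :=
  differenceSpan_le.2 fun y hy z hz ↦ differenceSpan_le.1 le_rfl y (h hy) z (h hz)

-- On an infinite subset minimizing the dimension of `differenceSpan`, every derivation of `ℂ`
-- kills the exponentials of the whole span.
theorem exists_infinite_subset_isAlgebraic_exp_sub (W : Submodule ℚ ℂ) [FiniteDimensional ℚ W]
    {e : ι → ℂ} (hS : S.Infinite) (hw : ∀ i ∈ B, ∀ j ∈ B, ∀ z ∈ S, w i z - w j z ∈ W)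
    (hmin : ∀ z ∈ S, IsMinimalVanishing B fun i ↦ e i * exp (w i z)) :
    ∃ S' ⊆ S, S'.Infinite ∧ ∀ z ∈ S', ∀ z' ∈ S', ∀ i ∈ B, ∀ j ∈ B,
      IsAlgebraic ℚ (exp ((w i z - w j z) - (w i z' - w j z'))) := by
  obtain ⟨S', ⟨hS', hS'inf⟩, hS'min⟩ := exists_minimalFor_of_wellFoundedLT
    (fun S' ↦ S' ⊆ S ∧ S'.Infinite) (fun S' ↦ Module.finrank ℚ (differenceSpan w B S'))
    ⟨S, le_rfl, hS⟩
  refine ⟨S', hS', hS'inf, fun z hz z' hz' i hi j hj ↦ ?_⟩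
  by_contra htr
  obtain ⟨D, hD⟩ := exists_derivation_apply_eq_one htr
  let : Differential ℂ := ⟨D.restrictScalars ℤ⟩
  obtain ⟨S₂, hS₂, hS₂inf, hS₂K⟩ := exists_infinite_subset_exp_sub_mem_constantSubfield W w
    (Submodule.fg_span (B.finite_toSet.image e)) hS'inf (e := fun i _ ↦ e i)
    (fun i hi _ _ ↦ Submodule.subset_span ⟨i, hi, rfl⟩)
    (fun i hi j hj z hz ↦ hw i hi j hj z (hS' hz)) (fun z hz ↦ hmin z (hS' hz))
  have : FiniteDimensional ℚ (differenceSpan w B S') := Submodule.finiteDimensional_of_le <|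
    differenceSpan_le.2 fun z hz z' hz' i hi j hj ↦
      W.sub_mem (hw i hi j hj z (hS' hz)) (hw i hi j hj z' (hS' hz'))
  have hle := differenceSpan_mono (w := w) (B := B) hS₂
  have heq : differenceSpan w B S₂ = differenceSpan w B S' := Submodule.eq_of_le_of_finrank_le hle
    (hS'min ⟨hS₂.trans hS', hS₂inf⟩ (Submodule.finrank_mono hle))
  have hker : differenceSpan w B S₂ ≤ LinearMap.ker expLogDeriv :=
    differenceSpan_le.2 fun z hz z' hz' i hi j hj ↦
      expLogDeriv_eq_zero.2 (hS₂K z hz z' hz' i hi j hj)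
  have hconst : D (exp ((w i z - w j z) - (w i z' - w j z'))) = 0 := expLogDeriv_eq_zero.1 <|
    differenceSpan_le.1 (heq ▸ hker) z hz z' hz' i hi j hj
  exact one_ne_zero (hD.symm.trans hconst)

end

/-! ### A relative form of Schanuel's conjecture -/

theorem exists_indep_subset_of_eRk_add_le {α : Type*} (M : Matroid α) {X Y : Set α}
    {I : Set α} (hI : M.IsBasis I X) (hIfin : I.Finite) (hY : Y ⊆ M.E) {n : ℕ∞}
    (h : M.eRk X + n ≤ M.eRk (X ∪ Y)) :
    ∃ J ⊆ Y, Disjoint I J ∧ M.Indep (I ∪ J) ∧ n ≤ J.encard := by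
  obtain ⟨I', hI', hII'⟩ := hI.indep.subset_isBasis_of_subset
    (hI.subset.trans subset_union_left) (union_subset hI.subset_ground hY)
  refine ⟨I' \ I, fun x hx ↦ (hI'.subset hx.1).resolve_left fun hxX ↦ hx.2 ?_,
    disjoint_sdiff_right, ?_, ?_⟩
  · exact hI.mem_of_insert_indep hxX (hI'.indep.subset (insert_subset hx.1 hII'))
  · rw [union_sdiff_cancel hII']
    exact hI'.indep
  · rw [← hI.encard_eq_eRk, ← hI'.encard_eq_eRk, ← encard_sdiff_add_encard_of_subset hII',
      add_comm] at h
    exact (ENat.add_le_add_iff_right hIfin.encard_lt_top.ne).1 h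

section RelAlgClosure

variable (K : Type*) {L : Type*} [Field K] [Field L] [Algebra K L]

/-- The subfield of `L` of all elements algebraic over the field generated by `K` and `s`. -/
def relAlgClosure (s : Set L) : Subfield L where
  __ := (Subalgebra.algebraicClosure (Algebra.adjoin K s) L).toSubring
  inv_mem' _ hx := IsAlgebraic.inv hx

theorem mem_relAlgClosure_of_isAlgebraic {s : Set L} {x : L}
    (hx : IsAlgebraic (relAlgClosure K s) x) : x ∈ relAlgClosure K s :=
  have hx' : IsAlgebraic (Subalgebra.algebraicClosure (Algebra.adjoin K s) L) x := hx
  hx'.restrictScalars (Algebra.adjoin K s)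

theorem subset_relAlgClosure_of_isBasis {s X : Set L}
    (hs : (AlgebraicIndependent.matroid K L).IsBasis s X) : X ⊆ relAlgClosure K s := by
  have h := (AlgebraicIndependent.matroid K L).subset_closure X (by simp)
  rwa [← hs.closure_eq_closure, AlgebraicIndependent.matroid_closure_eq] at h

theorem indep_matroid_relAlgClosure {s t : Set L} (hst : Disjoint s t)
    (h : (AlgebraicIndependent.matroid K L).Indep (s ∪ t)) :
    (AlgebraicIndependent.matroid (relAlgClosure K s) L).Indep t := by
  rw [AlgebraicIndependent.matroid_indep_iff] at h ⊢
  have hadj := h.adjoin_of_disjoint (hst.preimage ((↑) : ↥(s ∪ t) → L))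
  have hs : (fun x : ↥(s ∪ t) ↦ id (x : L)) '' ((↑) ⁻¹' s) = s := by simp
  rw [hs] at hadj
  exact hadj.subalgebraAlgebraicClosure.comp (fun x : t ↦ ⟨⟨x, Or.inr x.2⟩, x.2⟩)
    fun x y hxy ↦ Subtype.ext congr(($hxy : L))

theorem le_eRk_matroid_relAlgClosure {X Y I : Set L}
    (hI : (AlgebraicIndependent.matroid K L).IsBasis I X) (hIfin : I.Finite) {n : ℕ∞}
    (h : (AlgebraicIndependent.matroid K L).eRk X + n ≤
      (AlgebraicIndependent.matroid K L).eRk (X ∪ Y)) :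
    n ≤ (AlgebraicIndependent.matroid (relAlgClosure K I) L).eRk Y := by
  obtain ⟨J, hJY, hIJ, hind, hn⟩ :=
    exists_indep_subset_of_eRk_add_le _ hI hIfin (by simp) h
  exact hn.trans ((indep_matroid_relAlgClosure K hIJ hind).encard_le_eRk_of_subset hJY)

end RelAlgClosure

theorem exists_algebraicIndepOn_of_le_eRk {R A κ : Type*} [CommRing R] [CommRing A] [IsDomain A]
    [Algebra R A] [FaithfulSMul R A] [Finite κ] {v : κ → A} {n : ℕ}
    (h : n ≤ (AlgebraicIndependent.matroid R A).eRk (range v)) :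
    ∃ s : Finset κ, n ≤ s.card ∧ AlgebraicIndepOn R v s := by
  obtain ⟨I, hIv, hI, hcard⟩ := Matroid.le_eRk_iff.1 h
  obtain ⟨s, rfl, hinj⟩ := exists_image_eq_injOn_of_subset_range hIv
  have := Fintype.ofFinite s
  refine ⟨s.toFinset, ?_, ?_⟩
  · rw [hinj.encard_image, ← coe_toFinset s, encard_coe_eq_coe_finsetCard] at hcard
    exact_mod_cast hcard.ge
  · rw [coe_toFinset]
    exact (algebraicIndependent_image hinj).2 (AlgebraicIndependent.matroid_indep_iff.1 hI)

/-- The numbers `w i` together with their exponentials. -/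
def expData {ι : Type*} (w : ι → ℂ) : Set ℂ :=
  range (Sum.elim w fun i ↦ exp (w i))

theorem expData_sumElim {ι κ : Type*} (b : ι → ℂ) (w : κ → ℂ) :
    expData (Sum.elim b w) = expData b ∪ expData w := by
  ext x
  simp only [expData, mem_union, mem_range, Sum.exists, Sum.elim_inl, Sum.elim_inr]
  tauto

theorem expData_comp_equiv {ι κ : Type*} (e : ι ≃ κ) (w : κ → ℂ) :
    expData (w ∘ e) = expData w := by
  have : (Sum.elim (w ∘ e) fun i ↦ exp ((w ∘ e) i)) =
      (Sum.elim w fun i ↦ exp (w i)) ∘ Equiv.sumCongr e e := by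
    ext (i | i) <;> rfl
  rw [expData, this, (Equiv.sumCongr e e).surjective.range_comp, expData]

theorem trdegQ_le_eRk {X : Set ℂ} (hX : X.Finite) :
    trdegQ X ≤ ((AlgebraicIndependent.matroid ℚ ℂ).eRk X).toNat := by
  refine ciSup_le' fun ⟨t, htX, ht⟩ ↦ ?_
  have hle := (AlgebraicIndependent.matroid_indep_iff.2 ht).encard_le_eRk_of_subset htX
  rw [encard_coe_eq_coe_finsetCard] at hle
  have hfin : (AlgebraicIndependent.matroid ℚ ℂ).eRk X ≠ ⊤ :=
    ((Matroid.eRk_le_encard _ X).trans_lt hX.encard_lt_top).ne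
  exact_mod_cast (ENat.toNat_le_toNat hle hfin)

theorem SchanuelConjecture.card_le_eRk (hSC : SchanuelConjecture) {ι : Type*} [Fintype ι]
    {w : ι → ℂ} (hw : LinearIndependent ℚ w) :
    (Fintype.card ι : ℕ∞) ≤ (AlgebraicIndependent.matroid ℚ ℂ).eRk (expData w) := by
  let e := (Fintype.equivFin ι).symm
  have h := hSC _ (w ∘ e) (hw.comp e e.injective)
  rw [← Sum.elim_range] at h
  have h' := h.trans (trdegQ_le_eRk (finite_range _))
  rw [← expData_comp_equiv e w]
  exact (Nat.cast_le.2 (Nat.cast_le.1 h')).trans (ENat.natCast_toNat_le_self _)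

/-- Schanuel's inequality over the field `F` for numbers that are `ℚ`-linearly independent modulo
the space `W`, which together with its exponentials lies in `F`. -/
structure IsSchanuelPair (W : Submodule ℚ ℂ) (F : Subfield ℂ) : Prop where
  mem : ∀ w ∈ W, w ∈ F
  exp_mem : ∀ w ∈ W, exp w ∈ F
  le_eRk : ∀ (n : ℕ) (w : Fin n → ℂ), LinearIndependent ℚ (W.mkQ ∘ w) →
    n ≤ (AlgebraicIndependent.matroid F ℂ).eRk (expData w)

-- Take `b` minimizing the predimension `trdeg (C, b, exp b) - card b`, which Schanuel's conjecture
-- keeps nonnegative.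
theorem SchanuelConjecture.exists_predimension_min (hSC : SchanuelConjecture) {C : Set ℂ}
    (hC : C.Finite) :
    ∃ (m : ℕ) (b : Fin m → ℂ), LinearIndependent ℚ b ∧
      ∀ (n : ℕ) (w : Fin n → ℂ), LinearIndependent ℚ (Sum.elim b w) →
        (AlgebraicIndependent.matroid ℚ ℂ).eRk (C ∪ expData b) + n ≤
          (AlgebraicIndependent.matroid ℚ ℂ).eRk (C ∪ expData b ∪ expData w) := by
  let M := AlgebraicIndependent.matroid ℚ ℂ
  let δ (b : Σ m, Fin m → ℂ) : ℕ := (M.eRk (C ∪ expData b.2)).toNat - b.1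
  have hfin {m : ℕ} (b : Fin m → ℂ) : M.eRk (C ∪ expData b) ≠ ⊤ :=
    ((M.eRk_le_encard _).trans_lt (hC.union (finite_range _)).encard_lt_top).ne
  have hle {m : ℕ} {b : Fin m → ℂ} (hb : LinearIndependent ℚ b) :
      m ≤ (M.eRk (C ∪ expData b)).toNat := by
    have h := (hSC.card_le_eRk hb).trans (M.eRk_mono (subset_union_right (s := C)))
    rw [Fintype.card_fin] at h
    simpa using ENat.toNat_le_toNat h (hfin b)
  obtain ⟨⟨m, b⟩, hb, hmin⟩ := exists_minimalFor_of_wellFoundedLT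
    (fun b : Σ m, Fin m → ℂ ↦ LinearIndependent ℚ b.2) δ
    ⟨⟨0, Fin.elim0⟩, linearIndependent_empty_type⟩
  refine ⟨m, b, hb, fun n w hbw ↦ ?_⟩
  let bw := Sum.elim b w ∘ finSumFinEquiv.symm
  have hli : LinearIndependent ℚ bw := hbw.comp _ finSumFinEquiv.symm.injective
  have hbw_eq : C ∪ expData b ∪ expData w = C ∪ expData bw := by
    rw [expData_comp_equiv, expData_sumElim, union_assoc]
  have hδ : δ ⟨m, b⟩ ≤ δ ⟨m + n, bw⟩ := (le_total _ _).elim id (hmin hli)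
  have hbw_le := hle hli
  rw [hbw_eq, ← ENat.natCast_toNat (hfin b), ← ENat.natCast_toNat (hfin bw)]
  norm_cast
  simp only [δ] at hδ
  omega

theorem mem_of_mem_span_rat {L : Type*} [Field L] [CharZero L] {F : Subfield L} {s : Set L}
    (hs : s ⊆ F) {x : L} (hx : x ∈ Submodule.span ℚ s) : x ∈ F := by
  induction hx using Submodule.span_induction with
  | mem x hx => exact hs hx
  | zero => exact F.zero_mem
  | add x y _ _ hx hy => exact F.add_mem hx hy
  | smul q x _ hx =>
    rw [Rat.smul_def]
    exact F.mul_mem (SubfieldClass.ratCast_mem F q) hx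

theorem mem_units_of_pow_mem {L : Type*} [Field L] {F : Subfield L}
    (hF : ∀ x : L, IsAlgebraic F x → x ∈ F) (x : Lˣ) (n : ℕ) (hn : n ≠ 0)
    (hx : x ^ n ∈ F.toSubmonoid.units) : x ∈ F.toSubmonoid.units := by
  have hxF : (x : L) ∈ F := hF _ (.of_pow hn.bot_lt
    (isAlgebraic_algebraMap (⟨(x : L) ^ n, by simpa using hx.1⟩ : F)))
  exact Submonoid.mem_units_of_val_mem_inv_val_mem _ hxF (by simpa using F.inv_mem hxF)

theorem exp_mem_of_mem_span {F : Subfield ℂ} (hF : ∀ x : ℂ, IsAlgebraic F x → x ∈ F) {s : Set ℂ}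
    (hs : ∀ w ∈ s, exp w ∈ F) {w : ℂ} (hw : w ∈ Submodule.span ℚ s) : exp w ∈ F := by
  have hle : Submodule.span ℚ s ≤ expComap F.toSubmonoid.units (mem_units_of_pow_mem hF) :=
    Submodule.span_le.2 fun w hw ↦ mem_expComap.2 <|
      Submonoid.mem_units_of_val_mem_inv_val_mem _ (hs w hw) (by simpa using F.inv_mem (hs w hw))
  exact Submonoid.val_mem_of_mem_units _ (mem_expComap.1 (hle hw))

theorem SchanuelConjecture.exists_isSchanuelPair (hSC : SchanuelConjecture) {C : Set ℂ}
    (hC : C.Finite) : ∃ (W : Submodule ℚ ℂ) (F : Subfield ℂ),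
      FiniteDimensional ℚ W ∧ C ⊆ F ∧ IsSchanuelPair W F := by
  obtain ⟨m, b, hb, hmin⟩ := hSC.exists_predimension_min hC
  obtain ⟨I, hI⟩ := (AlgebraicIndependent.matroid ℚ ℂ).exists_isBasis (C ∪ expData b) (by simp)
  have hIfin : I.Finite := (hC.union (finite_range _)).subset hI.subset
  have hsub := union_subset_iff.1 (subset_relAlgClosure_of_isBasis ℚ hI)
  refine ⟨Submodule.span ℚ (range b), relAlgClosure ℚ I, .span_of_finite ℚ (finite_range b),
    hsub.1, fun w hw ↦ ?_, fun w hw ↦ ?_, fun n w hw ↦ ?_⟩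
  · exact mem_of_mem_span_rat (range_subset_iff.2 fun i ↦ hsub.2 ⟨Sum.inl i, rfl⟩) hw
  · exact exp_mem_of_mem_span (fun _ ↦ mem_relAlgClosure_of_isAlgebraic ℚ)
      (forall_mem_range.2 fun i ↦ hsub.2 ⟨Sum.inr i, rfl⟩) hw
  · refine le_eRk_matroid_relAlgClosure ℚ hI hIfin (hmin n w ?_)
    exact LinearIndependent.sumElim_of_quotient (M' := Submodule.span ℚ (range b))
      (f := fun i ↦ ⟨b i, Submodule.subset_span ⟨i, rfl⟩⟩)
      (.of_comp (Submodule.span ℚ (range b)).subtype hb) w hw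

theorem linearIndependent_prod_zpow {K L ι : Type*} [Field K] [Field L] [Algebra K L] [Fintype ι]
    {y : ι → L} (hy : AlgebraicIndependent K y) :
    LinearIndependent K fun m : ι → ℤ ↦ ∏ j, y j ^ m j := by
  have hy0 (j : ι) : y j ≠ 0 := hy.ne_zero j
  have hmon : LinearIndependent K fun e : ι →₀ ℕ ↦ ∏ j, y j ^ e j := by
    convert! (MvPolynomial.basisMonomials ι K).linearIndependent.map'
      (MvPolynomial.aeval y).toLinearMap (LinearMap.ker_eq_bot.2 hy) with e
    simp [MvPolynomial.aeval_monomial, Finsupp.prod_fintype]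
  refine linearIndependent_iff_finset_linearIndependent.2 fun s ↦ ?_
  let N : ℤ := ∑ m ∈ s, ∑ j, |m j|
  have hN {m : ι → ℤ} (hm : m ∈ s) (j : ι) : 0 ≤ m j + N := by
    have h₁ : |m j| ≤ ∑ j, |m j| :=
      Finset.single_le_sum (f := fun j ↦ |m j|) (fun _ _ ↦ abs_nonneg _) (Finset.mem_univ j)
    have h₂ : ∑ j, |m j| ≤ N := Finset.single_le_sum (f := fun m : ι → ℤ ↦ ∑ j, |m j|)
      (fun _ _ ↦ Finset.sum_nonneg fun _ _ ↦ abs_nonneg _) hm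
    linarith [neg_abs_le (m j)]
  let shift (m : s) : ι →₀ ℕ := Finsupp.equivFunOnFinite.symm fun j ↦ (m.1 j + N).toNat
  have hshift (m : s) (j : ι) : (shift m j : ℤ) = m.1 j + N := Int.toNat_of_nonneg (hN m.2 j)
  have hinj : Function.Injective shift := fun m m' h ↦ by
    ext j
    have := congr(($h j : ℤ))
    rw [hshift, hshift] at this
    linarith
  refine LinearIndependent.of_comp (LinearMap.mulLeft K (∏ j, y j ^ N)) ?_
  convert! hmon.comp shift hinj using 1
  ext m
  calc (∏ j, y j ^ N) * ∏ j, y j ^ m.1 j = ∏ j, y j ^ (m.1 j + N) := by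
        rw [← Finset.prod_mul_distrib]
        exact Finset.prod_congr rfl fun j _ ↦ by rw [zpow_add₀ (hy0 j), mul_comm]
    _ = ∏ j, y j ^ shift m j :=
        Finset.prod_congr rfl fun j _ ↦ by rw [← zpow_natCast, hshift]

theorem sum_filter_eq_zero_of_linearIndependent {K V ι κ : Type*} [Ring K] [AddCommGroup V]
    [Module K V] [DecidableEq κ] {x : κ → V} (hx : LinearIndependent K x) {B : Finset ι} {c : ι → K}
    {m : ι → κ} (h : ∑ i ∈ B, c i • x (m i) = 0) (k : κ) : ∑ i ∈ B with m i = k, c i = 0 := by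
  have hzero : ∑ i ∈ B, Finsupp.single (m i) (c i) = 0 := by
    refine linearIndependent_iff.1 hx _ ?_
    simpa [map_sum] using h
  have hk := congr($hzero k)
  rw [Finsupp.finsetSum_apply] at hk
  simpa [Finsupp.single_apply, Finset.sum_filter] using hk

theorem exists_lift_basis_mod {V : Type*} [AddCommGroup V] [Module ℚ V] (W : Submodule ℚ V)
    {N : Submodule ℤ V} (hN : N.FG) :
    ∃ (n : ℕ) (w : Fin n → V), (∀ j, w j ∈ N) ∧ LinearIndependent ℚ (W.mkQ ∘ w) ∧
      ∀ x ∈ N, ∃ m : Fin n → ℤ, x - ∑ j, m j • w j ∈ W := by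
  let π : V →ₗ[ℤ] V ⧸ W := W.mkQ.restrictScalars ℤ
  have : Module.Finite ℤ (N.map π) := Module.Finite.iff_fg.2 (hN.map π)
  have : IsAddTorsionFree (V ⧸ W) := IsAddTorsionFree.of_module_rat _
  let b := Module.finBasis ℤ (N.map π)
  choose w hwN hwb using fun j ↦ Submodule.mem_map.1 (b j).2
  refine ⟨_, w, hwN, ?_, fun x hx ↦ ⟨b.repr ⟨π x, Submodule.mem_map_of_mem hx⟩, ?_⟩⟩
  · rw [← LinearIndependent.iff_fractionRing ℤ ℚ]
    have hb := b.linearIndependent.map' (N.map π).subtype (Submodule.ker_subtype _)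
    rwa [show W.mkQ ∘ w = (N.map π).subtype ∘ b from funext hwb]
  · have hsum := congr(((N.map π).subtype) $(b.sum_repr ⟨π x, Submodule.mem_map_of_mem hx⟩))
    simp only [map_sum, map_zsmul, Submodule.subtype_apply, ← hwb] at hsum
    refine (Submodule.Quotient.mk_eq_zero W).1 (?_ : π _ = 0)
    rw [map_sub, map_sum, sub_eq_zero]
    simpa only [map_zsmul] using hsum.symm

theorem IsSchanuelPair.algebraicIndependent_exp {W : Submodule ℚ ℂ} {F : Subfield ℂ}
    (h : IsSchanuelPair W F) {n : ℕ} {w : Fin n → ℂ} (hw : LinearIndependent ℚ (W.mkQ ∘ w))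
    (hwF : ∀ j, w j ∈ F) : AlgebraicIndependent F fun j ↦ exp (w j) := by
  obtain ⟨s, hn, hs⟩ := exists_algebraicIndepOn_of_le_eRk (h.le_eRk n w hw)
  have hleft : s.toLeft = ∅ := Finset.eq_empty_of_forall_notMem fun j hj ↦
    (hs.transcendental ⟨_, Finset.mem_toLeft.1 hj⟩) (isAlgebraic_algebraMap (⟨w j, hwF j⟩ : F))
  have hright : s.toRight = Finset.univ := by
    rw [← Finset.card_toLeft_add_card_toRight, hleft, Finset.card_empty, zero_add] at hn
    exact Finset.eq_univ_of_card _ (le_antisymm (Finset.card_le_univ _) (by simpa using hn))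
  exact hs.comp (fun j ↦ ⟨Sum.inr j, Finset.mem_toRight.1 (hright ▸ Finset.mem_univ j)⟩)
    fun i j hij ↦ by simpa using hij

theorem IsSchanuelPair.sub_mem_of_isMinimalVanishing {W : Submodule ℚ ℂ} {F : Subfield ℂ}
    (h : IsSchanuelPair W F) {ι : Type*} {B : Finset ι} {c v : ι → ℂ} (hc : ∀ i ∈ B, c i ∈ F)
    (hv : ∀ i ∈ B, v i ∈ F) (hmin : IsMinimalVanishing B fun i ↦ c i * exp (v i)) :
    ∀ i ∈ B, ∀ j ∈ B, v i - v j ∈ W := by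
  classical
  have hNF : ∀ x ∈ Submodule.span ℤ (v '' B), x ∈ F := fun x hx ↦
    (AddSubgroup.closure_le F.toAddSubgroup).2 (image_subset_iff.2 hv)
      (by rwa [← Submodule.span_int_eq_addSubgroupClosure])
  obtain ⟨n, w, hwN, hw, hdec⟩ :=
    exists_lift_basis_mod W (Submodule.fg_span (B.finite_toSet.image v))
  have hexp := linearIndependent_prod_zpow
    (h.algebraicIndependent_exp hw fun j ↦ hNF _ (hwN j))
  choose! m hm using fun i (hi : i ∈ B) ↦ hdec _ (Submodule.subset_span ⟨i, hi, rfl⟩)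
  let d (i : ι) : ℂ := c i * exp (v i - ∑ j, m i j • w j)
  have hd : ∀ i ∈ B, ∃ a : F, a = d i := fun i hi ↦
    ⟨⟨d i, F.mul_mem (hc i hi) (h.exp_mem _ (hm i hi))⟩, rfl⟩
  choose! a ha using hd
  have hterm (i : ι) : c i * exp (v i) = d i * ∏ j, exp (w j) ^ m i j := by
    simp only [d, ← exp_int_mul, ← exp_sum, zsmul_eq_mul, mul_assoc, ← exp_add, sub_add_cancel]
  have hfiber (k : Fin n → ℤ) : ∑ i ∈ B with m i = k, a i = 0 := by
    refine sum_filter_eq_zero_of_linearIndependent hexp ?_ k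
    rw [← hmin.2.1]
    exact Finset.sum_congr rfl fun i hi ↦
      (congr($(ha i hi) * ∏ j, exp (w j) ^ m i j)).trans (hterm i).symm
  intro i hi j hj
  have hm_eq : m i = m j := hmin.eq_of_sum_filter_eq_zero (fun k ↦ ?_) hi hj
  · simpa [hm_eq] using W.sub_mem (hm i hi) (hm j hj)
  calc ∑ i ∈ B with m i = k, c i * exp (v i)
      = ∑ i ∈ B with m i = k, (a i : ℂ) * ∏ j, exp (w j) ^ k j :=
        Finset.sum_congr rfl fun i hi ↦ by
          rw [hterm, ← ha i (Finset.mem_filter.1 hi).1, (Finset.mem_filter.1 hi).2]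
    _ = (∑ i ∈ B with m i = k, a i : F) * ∏ j, exp (w j) ^ k j := by
        rw [← Finset.sum_mul]; norm_cast
    _ = 0 := by rw [hfiber]; simp

/-! ### Common zeros of coprime exponential polynomials -/

open Polynomial in
theorem isRelPrime_map_fractionRing {A K : Type*} [CommRing A] [IsDomain A]
    [UniqueFactorizationMonoid A] [Field K] [Algebra A K] [IsFractionRing A K] {p q : A[X]}
    (h : IsRelPrime p q) : IsRelPrime (p.map (algebraMap A K)) (q.map (algebraMap A K)) := by
  classical
  let : StrongNormalizationMonoid A := UniqueFactorizationMonoid.strongNormalizationMonoid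
  let : StrongNormalizedGCDMonoid A := UniqueFactorizationMonoid.toStrongNormalizedGCDMonoid A
  have hinj : Function.Injective (algebraMap A K) := IsFractionRing.injective A K
  intro d hdp hdq
  rcases eq_or_ne d 0 with rfl | hd
  · rw [zero_dvd_iff, Polynomial.map_eq_zero_iff hinj] at hdp hdq
    subst hdp hdq
    exact absurd (h dvd_rfl dvd_rfl) not_isUnit_zero
  set e := IsLocalization.integerNormalization (nonZeroDivisors A) d
  have hed : e.primPart.map (algebraMap A K) ∣ d := by
    obtain ⟨c, hc, hcd⟩ := IsLocalization.integerNormalization_spec (nonZeroDivisors A) d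
    have hc0 : algebraMap A K c ≠ 0 := by simpa using nonZeroDivisors.ne_zero hc
    have hdvd : e.primPart.map (algebraMap A K) ∣ algebraMap A K c • d := by
      rw [algebraMap_smul, ← hcd]
      exact Polynomial.map_dvd _ e.primPart_dvd
    rwa [Polynomial.smul_eq_C_mul, (isUnit_C.2 hc0.isUnit).dvd_mul_left] at hdvd
  have hprim := e.isPrimitive_primPart
  exact isUnit_or_eq_zero_of_isUnit_integerNormalization_primPart hd
    (h (hprim.dvd_of_fraction_map_dvd_fraction_map (hed.trans hdp))
      (hprim.dvd_of_fraction_map_dvd_fraction_map (hed.trans hdq)))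

open Polynomial in
theorem exists_mul_add_mul_eq_C_of_isRelPrime {A : Type*} [CommRing A] [IsDomain A]
    [UniqueFactorizationMonoid A] {p q : A[X]} (h : IsRelPrime p q) :
    ∃ r : A, r ≠ 0 ∧ ∃ a b : A[X], a * p + b * q = C r := by
  let K := FractionRing A
  have hinj : Function.Injective (algebraMap A K) := IsFractionRing.injective A K
  obtain ⟨a, b, hab⟩ := (isRelPrime_map_fractionRing (K := K) h).isCoprime
  obtain ⟨c, hc, hca⟩ := IsLocalization.integerNormalization_spec (nonZeroDivisors A) a
  obtain ⟨c', hc', hcb⟩ := IsLocalization.integerNormalization_spec (nonZeroDivisors A) b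
  refine ⟨c * c', mul_ne_zero (nonZeroDivisors.ne_zero hc) (nonZeroDivisors.ne_zero hc'),
    C c' * IsLocalization.integerNormalization (nonZeroDivisors A) a,
    C c * IsLocalization.integerNormalization (nonZeroDivisors A) b,
    Polynomial.map_injective _ hinj ?_⟩
  simp only [Polynomial.map_add, Polynomial.map_mul, map_C, hca, hcb, Algebra.smul_def, map_mul,
    Polynomial.algebraMap_apply]
  linear_combination C (algebraMap A K c) * C (algebraMap A K c') * hab

theorem exists_eliminant {K : Type*} [Field K] {n : ℕ} {P Q : MvPolynomial (Fin (n + 1)) K}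
    (h : IsRelPrime P Q) (i : Fin (n + 1)) :
    ∃ R : MvPolynomial (Fin n) K, R ≠ 0 ∧
      ∃ A B, A * P + B * Q = MvPolynomial.rename i.succAbove R := by
  let e : MvPolynomial (Fin (n + 1)) K ≃ₐ[K] Polynomial (MvPolynomial (Fin n) K) :=
    (MvPolynomial.renameEquiv K (finSuccEquiv' i)).trans (MvPolynomial.optionEquivLeft K (Fin n))
  have hrel : IsRelPrime (e P) (e Q) := fun d hdP hdQ ↦ by
    simpa using (h (d := e.symm d) (by simpa using map_dvd e.symm hdP)
      (by simpa using map_dvd e.symm hdQ)).map e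
  obtain ⟨r, hr, a, b, hab⟩ := exists_mul_add_mul_eq_C_of_isRelPrime hrel
  refine ⟨r, hr, e.symm a, e.symm b, e.injective ?_⟩
  have hC : (e : _ →ₐ[K] _).comp (MvPolynomial.rename i.succAbove) =
      (Polynomial.CAlgHom (R := MvPolynomial (Fin n) K)).restrictScalars K :=
    MvPolynomial.algHom_ext fun j ↦ by simp [e]
  rw [map_add, map_mul, map_mul, e.apply_symm_apply, e.apply_symm_apply, hab]
  exact (DFunLike.congr_fun hC r).symm

theorem eq_zero_of_eval_eq_zero {L κ : Type*} [Field L] {F : Subfield L} {v : κ → L}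
    (hv : AlgebraicIndependent F v) {p : MvPolynomial κ L} (hp : ∀ m, p.coeff m ∈ F)
    (h0 : MvPolynomial.eval v p = 0) : p = 0 := by
  obtain ⟨q, rfl⟩ : p ∈ range (MvPolynomial.map (σ := κ) (algebraMap F L)) := by
    rw [MvPolynomial.mem_range_map_iff_coeffs_subset]
    intro x hx
    obtain ⟨m, -, rfl⟩ := MvPolynomial.mem_coeffs_iff.1 hx
    exact ⟨⟨_, hp m⟩, rfl⟩
  rw [MvPolynomial.eval_map] at h0
  rw [algebraicIndependent_iff.1 hv q h0, map_zero]

theorem exists_forall_succAbove_mem {n : ℕ} {J : Finset (Fin (n + 1))} (h : n ≤ J.card) :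
    ∃ i : Fin (n + 1), ∀ j, i.succAbove j ∈ J := by
  have hcompl : Jᶜ.card ≤ 1 := by
    rw [Finset.card_compl, Fintype.card_fin]
    omega
  obtain ⟨i, hi⟩ := Finset.card_le_one_iff_subset_singleton.1 hcompl
  refine ⟨i, fun j ↦ by_contra fun hj ↦ Fin.succAbove_ne i j ?_⟩
  simpa using hi (Finset.mem_compl.2 hj)

-- The numbers `ω j * z` span a line over `F`, so they contribute at most one to the
-- transcendence degree.
theorem IsSchanuelPair.exists_algebraicIndependent_exp_succAbove {W : Submodule ℚ ℂ}
    {F : Subfield ℂ} (h : IsSchanuelPair W F) {n : ℕ} {ω : Fin (n + 1) → ℂ} (hωF : ∀ j, ω j ∈ F)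
    (hω0 : ∀ j, ω j ≠ 0) {z : ℂ} (hli : LinearIndependent ℚ fun j ↦ W.mkQ (ω j * z)) :
    ∃ i : Fin (n + 1), AlgebraicIndependent F fun j ↦ exp (ω (i.succAbove j) * z) := by
  obtain ⟨s, hn, hs⟩ := exists_algebraicIndepOn_of_le_eRk (h.le_eRk _ _ hli)
  have hleft : s.toLeft.card ≤ 1 := by
    rw [Finset.card_le_one]
    intro i hi j hj
    by_contra hij
    rw [Finset.mem_toLeft] at hi hj
    have hpair : LinearIndepOn F (Sum.elim (fun j ↦ ω j * z) fun j ↦ exp (ω j * z))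
        {Sum.inl i, Sum.inl j} :=
      LinearIndepOn.mono (s := s) hs.linearIndependent (by simp [insert_subset_iff, hi, hj])
    have hrel := (LinearIndepOn.pair_iff _ (by simpa using hij)).1 hpair
      ⟨ω j, hωF j⟩ ⟨-ω i, F.neg_mem (hωF i)⟩ (show ω j * (ω i * z) + -ω i * (ω j * z) = 0 by ring)
    exact hω0 j (congrArg Subtype.val hrel.1)
  have hright : n ≤ s.toRight.card := by
    have := s.card_toLeft_add_card_toRight
    omega
  obtain ⟨i, hi⟩ := exists_forall_succAbove_mem hright
  exact ⟨i, hs.comp (fun j ↦ ⟨Sum.inr (i.succAbove j), Finset.mem_toRight.1 (hi j)⟩)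
    fun j k hjk ↦ by simpa using hjk⟩

theorem mem_of_not_linearIndependent_mkQ {W : Submodule ℚ ℂ} {F : Subfield ℂ}
    (hWF : ∀ w ∈ W, w ∈ F) {ι : Type*} [Finite ι] {ω : ι → ℂ} (hωF : ∀ j, ω j ∈ F)
    (hω : LinearIndependent ℚ ω) {z : ℂ}
    (h : ¬ LinearIndependent ℚ fun j ↦ W.mkQ (ω j * z)) : z ∈ F := by
  have := Fintype.ofFinite ι
  obtain ⟨g, hg, j, hj⟩ := Fintype.not_linearIndependent_iff.1 h
  have hgω : ∑ i, g i • ω i ≠ 0 := fun h0 ↦ hj (Fintype.linearIndependent_iff.1 hω g h0 j)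
  have hgF : ∑ i, g i • ω i ∈ F := mem_of_mem_span_rat (range_subset_iff.2 hωF)
    (sum_mem fun i _ ↦ Submodule.smul_mem _ _ (Submodule.subset_span ⟨i, rfl⟩))
  have hW : (∑ i, g i • ω i) * z ∈ W := by
    rw [← Submodule.Quotient.mk_eq_zero, ← Submodule.mkQ_apply, Finset.sum_mul, map_sum, ← hg]
    exact Finset.sum_congr rfl fun i _ ↦ by rw [smul_mul_assoc, map_smul]
  simpa [inv_mul_cancel_left₀ hgω] using F.mul_mem (F.inv_mem hgF) (hWF _ hW)

theorem SchanuelConjecture.exists_finiteDimensional_sub_mul_mem (hSC : SchanuelConjecture) {k : ℕ}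
    {ω : Fin k → ℂ} (hω : LinearIndependent ℚ ω) {P Q : MvPolynomial (Fin k) ℂ}
    (hPQ : IsRelPrime P Q) (C : Finset ℂ) :
    ∃ W : Submodule ℚ ℂ, FiniteDimensional ℚ W ∧ ∀ z : ℂ,
      MvPolynomial.eval (fun j ↦ exp (ω j * z)) P = 0 →
      MvPolynomial.eval (fun j ↦ exp (ω j * z)) Q = 0 →
      ∀ {ι : Type} {B : Finset ι} {c μ : ι → ℂ}, (∀ i ∈ B, c i ∈ C ∧ μ i ∈ C) →
        IsMinimalVanishing B (fun i ↦ c i * exp (μ i * z)) →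
        ∀ i ∈ B, ∀ j ∈ B, (μ i - μ j) * z ∈ W := by
  cases k with
  | zero =>
    refine ⟨⊥, inferInstance, fun z hP hQ ↦ absurd hPQ fun hrel ↦ ?_⟩
    rw [MvPolynomial.eq_C_of_isEmpty P, MvPolynomial.eval_C] at hP
    rw [MvPolynomial.eq_C_of_isEmpty Q, MvPolynomial.eval_C] at hQ
    rw [MvPolynomial.eq_C_of_isEmpty P, MvPolynomial.eq_C_of_isEmpty Q, hP, hQ, map_zero] at hrel
    exact not_isUnit_zero (hrel dvd_rfl dvd_rfl)
  | succ n =>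
    choose R hR0 A B hR using exists_eliminant hPQ
    obtain ⟨W, F, hW, hCF, hWF⟩ := hSC.exists_isSchanuelPair (C := C ∪ range ω ∪
      ⋃ i, (R i).coeffs) ((C.finite_toSet.union (finite_range ω)).union
        (finite_iUnion fun i ↦ (R i).coeffs.finite_toSet))
    obtain ⟨⟨hCF, hωF⟩, hRF⟩ : (↑C ⊆ (F : Set ℂ) ∧ ∀ j, ω j ∈ F) ∧
        ∀ i, ↑(R i).coeffs ⊆ (F : Set ℂ) := by
      simpa [range_subset_iff] using hCF
    refine ⟨W, hW, fun z hP hQ ι B c μ hcμ hmin i hi j hj ↦ ?_⟩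
    have hz : z ∈ F := by
      by_cases hli : LinearIndependent ℚ fun j ↦ W.mkQ (ω j * z)
      · obtain ⟨i, hi⟩ :=
          hWF.exists_algebraicIndependent_exp_succAbove hωF (fun j ↦ hω.ne_zero j) hli
        refine absurd (eq_zero_of_eval_eq_zero hi (fun m ↦ ?_) ?_) (hR0 i)
        · by_cases h0 : (R i).coeff m = 0
          · exact h0 ▸ F.zero_mem
          · exact hRF i (MvPolynomial.coeff_mem_coeffs m h0)
        · have heval := congrArg (MvPolynomial.eval fun j ↦ exp (ω j * z)) (hR i)
          rw [map_add, map_mul, map_mul, hP, hQ, mul_zero, mul_zero, add_zero,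
            MvPolynomial.eval_rename] at heval
          exact heval.symm
      · exact mem_of_not_linearIndependent_mkQ hWF.mem hωF hω hli
    rw [sub_mul]
    exact hWF.sub_mem_of_isMinimalVanishing (v := fun i ↦ μ i * z)
      (fun i hi ↦ hCF (hcμ i hi).1) (fun i hi ↦ F.mul_mem (hCF (hcμ i hi).2) hz) hmin i hi j hj

/-! ### The four exponentials theorem, from Schanuel's conjecture -/

theorem SchanuelConjecture.algebraicIndependent_of_isAlgebraic_exp (hSC : SchanuelConjecture)
    {ι : Type*} [Finite ι] {w : ι → ℂ} (hw : LinearIndependent ℚ w)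
    (hexp : ∀ i, IsAlgebraic ℚ (exp (w i))) : AlgebraicIndependent ℚ w := by
  have := Fintype.ofFinite ι
  obtain ⟨s, hcard, hs⟩ := exists_algebraicIndepOn_of_le_eRk (hSC.card_le_eRk hw)
  have hright : s.toRight = ∅ := Finset.eq_empty_of_forall_notMem fun i hi ↦
    hs.transcendental ⟨Sum.inr i, Finset.mem_toRight.1 hi⟩ (hexp i)
  have hleft : s.toLeft = Finset.univ := by
    rw [← Finset.card_toLeft_add_card_toRight, hright, Finset.card_empty, add_zero] at hcard
    exact Finset.eq_univ_of_card _ (le_antisymm (Finset.card_le_univ _) hcard)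
  exact hs.comp (fun i ↦ ⟨Sum.inl i, Finset.mem_toLeft.1 (hleft ▸ Finset.mem_univ i)⟩)
    fun i j hij ↦ by simpa using hij

open MvPolynomial in
theorem eq_zero_of_X_dvd_sum_C_mul_X {K κ : Type*} [CommRing K] [Fintype κ] {c : κ → K} {i : κ}
    (h : X i ∣ ∑ j, C (c j) * X j) {j : κ} (hj : j ≠ i) : c j = 0 := by
  classical
  obtain ⟨r, hr⟩ := h
  have hcoeff : (∑ l, C (c l) * X l : MvPolynomial κ K).coeff (Finsupp.single j 1) = c j := by
    simp [coeff_sum, coeff_C_mul, coeff_X, Finsupp.single_left_inj]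
  rw [← hcoeff, hr, coeff_X_mul', if_neg (by simpa using hj.symm)]

-- In terms of a basis of `span ℚ {a, b, c, d}` containing `a`, which is algebraically
-- independent, the relation says that the variable `a` divides a product of two linear forms.
theorem SchanuelConjecture.mem_span_or_mem_span_of_mul_eq_mul (hSC : SchanuelConjecture)
    {a b c d : ℂ} (ha : IsAlgebraic ℚ (exp a)) (hb : IsAlgebraic ℚ (exp b))
    (hc : IsAlgebraic ℚ (exp c)) (hd : IsAlgebraic ℚ (exp d)) (ha0 : a ≠ 0)
    (h : a * d = b * c) : b ∈ Submodule.span ℚ {a} ∨ c ∈ Submodule.span ℚ {a} := by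
  have hli_a : LinearIndepOn ℚ id {a} := (linearIndepOn_singleton_iff ℚ).2 ha0
  obtain ⟨s, hs, has, hspan, hli⟩ :=
    exists_linearIndepOn_extension (t := {a, b, c, d}) hli_a (by simp)
  have : Fintype s := ((Set.toFinite _).subset hs).fintype
  have hai : AlgebraicIndependent ℚ ((↑) : s → ℂ) :=
    hSC.algebraicIndependent_of_isAlgebraic_exp hli fun x ↦ by
      rcases hs x.2 with h | h | h | (h : _ = d) <;> rwa [h]
  have hlin : ∀ x ∈ ({a, b, c, d} : Set ℂ), ∃ r : s → ℚ, ∑ j, r j • (j : ℂ) = x := fun x hx ↦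
    (Submodule.mem_span_range_iff_exists_fun ℚ).1 (by simpa using hspan (by simpa using hx))
  let i : s := ⟨a, has rfl⟩
  let form (r : s → ℚ) : MvPolynomial s ℚ := ∑ j, MvPolynomial.C (r j) * MvPolynomial.X j
  have hform (r : s → ℚ) : MvPolynomial.aeval (↑) (form r) = ∑ j, r j • (j : ℂ) := by
    simp [form, Algebra.smul_def]
  have hmem (r : s → ℚ) (hr : MvPolynomial.X i ∣ form r) :
      ∑ j, r j • (j : ℂ) ∈ Submodule.span ℚ {a} := by
    rw [Finset.sum_eq_single i (fun j _ hj ↦ by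
      rw [eq_zero_of_X_dvd_sum_C_mul_X hr hj, zero_smul]) (by simp)]
    exact Submodule.smul_mem _ _ (Submodule.mem_span_singleton_self a)
  obtain ⟨rb, rfl⟩ := hlin b (by simp)
  obtain ⟨rc, rfl⟩ := hlin c (by simp)
  obtain ⟨rd, rfl⟩ := hlin d (by simp)
  have hmul : MvPolynomial.X i * form rd = form rb * form rc := hai (by
    simpa only [map_mul, hform, MvPolynomial.aeval_X] using h)
  exact ((MvPolynomial.X_prime.dvd_or_dvd (Dvd.intro _ hmul)).imp (hmem rb) (hmem rc))

theorem SchanuelConjecture.four_exponentials (hSC : SchanuelConjecture) {a b z z' : ℂ}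
    (ha : a ≠ 0) (hz : z ≠ 0) (hab : b ∉ Submodule.span ℚ {a}) (hzz' : z' ∉ Submodule.span ℚ {z})
    (haz : IsAlgebraic ℚ (exp (a * z))) (haz' : IsAlgebraic ℚ (exp (a * z')))
    (hbz : IsAlgebraic ℚ (exp (b * z))) : ¬ IsAlgebraic ℚ (exp (b * z')) := fun hbz' ↦ by
  simp only [Submodule.mem_span_singleton, not_exists] at hab hzz'
  rcases hSC.mem_span_or_mem_span_of_mul_eq_mul haz haz' hbz hbz' (mul_ne_zero ha hz)
    (by ring) with h | h <;> obtain ⟨q, hq⟩ := Submodule.mem_span_singleton.1 h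
  · exact hzz' q (mul_left_cancel₀ ha (by rw [← hq, mul_smul_comm]))
  · exact hab q (mul_right_cancel₀ hz (by rw [← hq, smul_mul_assoc]))

/-! ### Power sums vanishing infinitely often -/

section PowerSums

variable {K Γ₀ ι : Type*} [Field K] [LinearOrderedCommGroupWithZero Γ₀]

theorem valuation_intCast_le_one (v : Valuation K Γ₀) (n : ℤ) : v n ≤ 1 :=
  intCast_mem v.integer n

theorem valuation_natCast_eq_one_of_not_dvd {v : Valuation K Γ₀} {p s : ℕ} (hp : p.Prime)
    (hvp : v p < 1) (hs : ¬ p ∣ s) : v s = 1 := by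
  obtain ⟨a, b, hab⟩ := Nat.isCoprime_iff_coprime.2 ((hp.coprime_iff_not_dvd).2 hs)
  refine le_antisymm (by simpa using valuation_intCast_le_one v s) (not_lt.1 fun hlt ↦ ?_)
  have habK : (a : K) * p + b * s = 1 := by exact_mod_cast congrArg (Int.cast (R := K)) hab
  refine (v.map_add_lt (x := a * p) (y := b * s) (g := 1) ?_ ?_).ne (by rw [habK, map_one])
  · rw [map_mul]
    exact mul_lt_one_of_nonneg_of_lt_one_right (valuation_intCast_le_one v a) zero_le hvp
  · rw [map_mul]
    exact mul_lt_one_of_nonneg_of_lt_one_right (valuation_intCast_le_one v b) zero_le hlt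

open Nat in
theorem valuation_pow_half_le_factorial {v : Valuation K Γ₀} {p : ℕ} (hp : p.Prime) (hp2 : p ≠ 2)
    (hvp : v p < 1) (l : ℕ) : v (p : K) ^ (l / 2) ≤ v (l ! : K) := by
  have := Fact.mk hp
  obtain ⟨w, u, hu, hl⟩ := Nat.exists_eq_pow_mul_and_not_dvd l.factorial_ne_zero p hp.ne_one
  have hw : 2 * w ≤ l := by
    have hval : padicValNat p l ! = w := by
      rw [hl, padicValNat.mul (pow_ne_zero _ hp.ne_zero) (by rintro rfl; simp at hu),
        padicValNat.prime_pow, padicValNat.eq_zero_of_not_dvd hu, add_zero]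
    have hlegendre := sub_one_mul_padicValNat_factorial (p := p) l
    rw [hval] at hlegendre
    have hp3 : 2 ≤ p - 1 := by have := hp.two_le; omega
    exact (Nat.mul_le_mul_right w hp3).trans (hlegendre ▸ Nat.sub_le _ _)
  rw [hl, Nat.cast_mul, Nat.cast_pow, map_mul, map_pow,
    valuation_natCast_eq_one_of_not_dvd hp hvp hu, mul_one]
  exact pow_le_pow_right_of_le_one' hvp.le (by omega)

open Polynomial in
theorem sum_C_mul_map_eq_mul_of_dvd {A R : Type*} [CommRing A] [CommRing R] (φ : A →+* R)
    {Q : A[X]} (hQ : Q.Monic) (s : Finset ι) {d : ι → R} {q : ι → A[X]}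
    (h : Q.map φ ∣ ∑ l ∈ s, C (d l) * (q l).map φ) :
    ∑ l ∈ s, C (d l) * (q l).map φ = Q.map φ * ∑ l ∈ s, C (d l) * (q l /ₘ Q).map φ := by
  have hdiv (l : ι) : C (d l) * (q l).map φ =
      C (d l) * (q l %ₘ Q).map φ + Q.map φ * (C (d l) * (q l /ₘ Q).map φ) := by
    conv_lhs => rw [← modByMonic_add_div (q l) Q, Polynomial.map_add, Polynomial.map_mul]
    ring
  have hrem : ∑ l ∈ s, C (d l) * (q l %ₘ Q).map φ = 0 := by
    rw [← (modByMonic_eq_zero_iff_dvd (hQ.map φ)).2 h, ← modByMonicHom_apply, map_sum]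
    refine Finset.sum_congr rfl fun l _ ↦ ?_
    rw [modByMonicHom_apply, ← smul_eq_C_mul, ← smul_eq_C_mul, smul_modByMonic, map_modByMonic _ hQ]
  rw [Finset.sum_congr rfl fun l _ ↦ hdiv l, Finset.sum_add_distrib, hrem, zero_add, Finset.mul_sum]

variable [CharZero K]

-- Dividing by `∏ n ∈ N, (X - n)` kills the terms of degree below `N.card` and keeps the
-- quotients of the `q l` integral.
open Polynomial in
theorem valuation_eval_le_of_eval_eq_zero (v : Valuation K Γ₀) {N : Finset ℕ} {L : ℕ} {d : ℕ → K}
    {r : Γ₀} (hd : ∀ l, N.card ≤ l → v (d l) ≤ r) {q : ℕ → ℤ[X]} (hq : ∀ l, (q l).natDegree = l)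
    (h0 : ∀ n ∈ N, (∑ l ∈ Finset.range L, C (d l) * (q l).map (Int.castRingHom K)).eval (n : K) = 0)
    (k : ℕ) :
    v ((∑ l ∈ Finset.range L, C (d l) * (q l).map (Int.castRingHom K)).eval (k : K)) ≤ r := by
  let Q : ℤ[X] := ∏ n ∈ N, (X - C (n : ℤ))
  have hQ : Q.Monic := monic_prod_of_monic _ _ fun n _ ↦ monic_X_sub_C _
  have hdeg : Q.natDegree = N.card := by
    rw [natDegree_prod_of_monic _ _ fun n _ ↦ monic_X_sub_C _,
      Finset.sum_congr rfl fun n _ ↦ natDegree_X_sub_C _, Finset.card_eq_sum_ones]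
  have hdvd : Q.map (Int.castRingHom K) ∣
      ∑ l ∈ Finset.range L, C (d l) * (q l).map (Int.castRingHom K) := by
    rw [show Q.map (Int.castRingHom K) = ∏ n ∈ N, (X - C (n : K)) by simp [Q, Polynomial.map_prod]]
    refine Finset.prod_dvd_of_coprime (fun a _ b _ hab ↦ ?_) fun n hn ↦ dvd_iff_isRoot.2 (h0 n hn)
    exact pairwise_coprime_X_sub_C (s := fun n : ℕ ↦ (n : K)) Nat.cast_injective hab
  have v_eval_le_one (p : ℤ[X]) : v ((p.map (Int.castRingHom K)).eval (k : K)) ≤ 1 := by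
    rw [eval_natCast_map]
    exact valuation_intCast_le_one v _
  rw [sum_C_mul_map_eq_mul_of_dvd _ hQ _ hdvd, eval_mul, map_mul, eval_finsetSum]
  refine (mul_le_of_le_one_left' (v_eval_le_one Q)).trans (v.map_sum_le fun l _ ↦ ?_)
  rcases lt_or_ge l N.card with hl | hl
  · rw [(divByMonic_eq_zero_iff hQ).2 (degree_lt_degree (by rwa [hq, hdeg]))]
    simp
  · rw [eval_mul, eval_C, map_mul]
    exact (mul_le_of_le_one_right' (v_eval_le_one _)).trans (hd l hl)

open Polynomial Nat in
theorem sum_mul_pow_eq_eval_sum_descPochhammer (B : Finset ι) (c y : ι → K) {n L : ℕ} (hn : n < L) :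
    ∑ i ∈ B, c i * y i ^ n = (∑ l ∈ Finset.range L, C ((∑ i ∈ B, c i * (y i - 1) ^ l) / l !) *
      (descPochhammer ℤ l).map (Int.castRingHom K)).eval (n : K) := by
  have hterm (l : ℕ) : (C ((∑ i ∈ B, c i * (y i - 1) ^ l) / l !) *
      (descPochhammer ℤ l).map (Int.castRingHom K)).eval (n : K) =
      ∑ i ∈ B, c i * ((y i - 1) ^ l * n.choose l) := by
    have hl : (l ! : K) ≠ 0 := mod_cast l.factorial_ne_zero
    rw [eval_mul, eval_C, descPochhammer_map, descPochhammer_eval_eq_descFactorial,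
      Nat.descFactorial_eq_factorial_mul_choose, Nat.cast_mul, ← mul_assoc, div_mul_cancel₀ _ hl,
      Finset.sum_mul]
    exact Finset.sum_congr rfl fun i _ ↦ mul_assoc _ _ _
  have hchoose : ∀ i, y i ^ n = ∑ l ∈ Finset.range L, (y i - 1) ^ l * n.choose l := fun i ↦ by
    rw [← Finset.sum_subset (Finset.range_subset_range.2 hn) fun l _ hl ↦ by
      rw [Nat.choose_eq_zero_of_lt (by simpa using hl), Nat.cast_zero, mul_zero]]
    conv_lhs => rw [← sub_add_cancel (y i) 1, add_pow]
    simp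
  simp only [eval_finsetSum, hterm]
  rw [Finset.sum_comm]
  exact Finset.sum_congr rfl fun i _ ↦ by rw [hchoose, Finset.mul_sum]

-- Skolem's `p`-adic argument: `n ↦ ∑ i, c i * y i ^ n` is a `p`-adically convergent Newton
-- series, and the more zeros it has, the smaller all its values are.
theorem sum_mul_pow_eq_zero_of_infinite [MulArchimedean Γ₀] {v : Valuation K Γ₀} {p : ℕ}
    (hp : p.Prime) (hp2 : p ≠ 2) (hvp : v p < 1) {B : Finset ι} {c y : ι → K}
    (hy : ∀ i ∈ B, v (y i - 1) ≤ v p) {T : Set ℕ} (hT : T.Infinite)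
    (h0 : ∀ n ∈ T, ∑ i ∈ B, c i * y i ^ n = 0) (k : ℕ) : ∑ i ∈ B, c i * y i ^ k = 0 := by
  obtain ⟨C, hC⟩ := (B.finite_toSet.image fun i ↦ v (c i)).bddAbove
  have hp0 : v (p : K) ≠ 0 := (v.ne_zero_iff).2 (mod_cast hp.ne_zero)
  have hcoeff (m l : ℕ) (hml : 2 * m ≤ l) :
      v ((∑ i ∈ B, c i * (y i - 1) ^ l) / l.factorial) ≤ C * v p ^ m := by
    have hsum : v (∑ i ∈ B, c i * (y i - 1) ^ l) ≤ C * v p ^ l := v.map_sum_le fun i hi ↦ by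
      rw [map_mul, map_pow]
      exact mul_le_mul' (hC ⟨i, hi, rfl⟩) (pow_le_pow_left' (hy i hi) l)
    have hfac := valuation_pow_half_le_factorial hp hp2 hvp l
    rw [map_div₀, div_le_iff₀ ((zero_lt_iff.2 (pow_ne_zero _ hp0)).trans_le hfac)]
    calc v (∑ i ∈ B, c i * (y i - 1) ^ l) ≤ C * v p ^ l := hsum
      _ ≤ C * (v p ^ m * v p ^ (l / 2)) := by
        rw [← pow_add]
        exact mul_le_mul_right (pow_le_pow_right_of_le_one' hvp.le (by omega)) _
      _ ≤ C * v p ^ m * v (l.factorial : K) := by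
        rw [← mul_assoc]
        exact mul_le_mul_right hfac _
  have hsmall (m : ℕ) : v (∑ i ∈ B, c i * y i ^ k) ≤ C * v p ^ m := by
    obtain ⟨N, hNT, hN⟩ := hT.exists_subset_card_eq (2 * m)
    have hlt : ∀ n ∈ insert k N, n < (insert k N).sup id + 1 := fun n hn ↦
      Nat.lt_succ_of_le (Finset.le_sup (f := id) hn)
    rw [sum_mul_pow_eq_eval_sum_descPochhammer B c y (hlt k (by simp))]
    refine valuation_eval_le_of_eval_eq_zero v (N := N) (fun l hl ↦ hcoeff m l (hN ▸ hl))
      (fun l ↦ descPochhammer_natDegree ℤ l) (fun n hn ↦ ?_) k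
    rw [← sum_mul_pow_eq_eval_sum_descPochhammer B c y (hlt n (by simp [hn])), h0 n (hNT hn)]
  by_contra hne
  have hv0 : v (∑ i ∈ B, c i * y i ^ k) ≠ 0 := v.ne_zero_iff.2 hne
  have hC0 : C ≠ 0 := by
    rintro rfl
    simpa [hne] using hsmall 0
  obtain ⟨n, hn⟩ := exists_pow_lt₀ hvp (Units.mk0 (v (∑ i ∈ B, c i * y i ^ k) / C)
    (div_ne_zero hv0 hC0))
  rw [Units.val_mk0, lt_div_iff₀' (zero_lt_iff.2 hC0)] at hn
  exact (hsmall n).not_gt hn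

end PowerSums

theorem sum_filter_eq_zero_of_sum_mul_pow_eq_zero {K ι : Type*} [Field K] [DecidableEq K]
    {B : Finset ι} {c y : ι → K} (h : ∀ k : ℕ, ∑ i ∈ B, c i * y i ^ k = 0) (η : K) :
    ∑ i ∈ B with y i = η, c i = 0 := by
  have hpow : LinearIndependent K fun (η : K) (k : ℕ) ↦ η ^ k :=
    ((linearIndependent_monoidHom (Multiplicative ℕ) K).comp _ (powersHom K).injective)
  refine sum_filter_eq_zero_of_linearIndependent hpow (funext fun k ↦ ?_) η
  simpa [Finset.sum_apply] using h k

section NumberField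

variable {K : Type*} [Field K] [NumberField K]

open NumberField IsDedekindDomain

theorem exists_prime_ne_two_isCoprime {γ : 𝓞 K} (hγ : γ ≠ 0) :
    ∃ p : ℕ, p.Prime ∧ p ≠ 2 ∧ IsCoprime γ (p : 𝓞 K) := by
  let N := Ideal.absNorm (Ideal.span {γ})
  have hN : N ≠ 0 := by simpa [N, Ideal.absNorm_eq_zero_iff] using hγ
  obtain ⟨p, hp, hprime⟩ := Nat.exists_infinite_primes (N + 3)
  have hcop : IsCoprime (N : 𝓞 K) (p : 𝓞 K) := by
    have hNp : N.Coprime p := ((hprime.coprime_iff_not_dvd).2 fun hdvd ↦ by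
      have := Nat.le_of_dvd (Nat.pos_of_ne_zero hN) hdvd
      omega).symm
    simpa using (Nat.isCoprime_iff_coprime.2 hNp).map (Int.castRingHom (𝓞 K))
  exact ⟨p, hprime, by omega,
    hcop.of_isCoprime_of_dvd_left (Ideal.mem_span_singleton.1 (Ideal.absNorm_mem _))⟩

theorem exists_heightOneSpectrum_natCast_mem {p : ℕ} (hp : p.Prime) :
    ∃ w : HeightOneSpectrum (𝓞 K), (p : 𝓞 K) ∈ w.asIdeal := by
  have hnotUnit : ¬ IsUnit (p : 𝓞 K) := fun h ↦ by
    rw [show (p : 𝓞 K) = algebraMap ℤ (𝓞 K) p by simp] at h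
    exact (Nat.prime_iff_prime_int.1 hp).not_isUnit (IsUnit.of_map _ _ h)
  obtain ⟨m, hm, hpm⟩ := exists_max_ideal_of_mem_nonunits (mem_nonunits_iff.2 hnotUnit)
  refine ⟨⟨m, hm.isPrime, ?_⟩, hpm⟩
  rintro rfl
  exact hp.ne_zero (by simpa using hpm)

theorem exists_pow_forall_dvd_pow_sub_one {p : 𝓞 K} (hp : p ≠ 0) :
    ∃ M : ℕ, 0 < M ∧ ∀ α : 𝓞 K, IsCoprime α p → p ∣ α ^ M - 1 := by
  let I := Ideal.span {p}
  have : Finite (𝓞 K ⧸ I) := Ring.HasFiniteQuotients.finiteQuotient (by simpa [I] using hp)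
  refine ⟨Nat.card (𝓞 K ⧸ I)ˣ, Nat.card_pos, fun α hα ↦ ?_⟩
  have hunit : IsUnit (Ideal.Quotient.mk I α) := by
    obtain ⟨a, b, hab⟩ := hα
    refine IsUnit.of_mul_eq_one_right (Ideal.Quotient.mk I a) ?_
    rw [← map_mul, ← map_one (Ideal.Quotient.mk I), ← hab, Ideal.Quotient.eq,
      Ideal.mem_span_singleton]
    exact ⟨-b, by ring⟩
  obtain ⟨u, hu⟩ := hunit
  rw [← Ideal.mem_span_singleton, ← Ideal.Quotient.eq_zero_iff_mem, map_sub, map_pow, map_one,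
    ← hu, ← Units.val_pow_eq_pow_val, pow_card_eq_one', Units.val_one, sub_self]

open WithZero in
theorem exists_valuation_pow_sub_one_le {ι : Type*} {B : Finset ι} {x : ι → K}
    (hx : ∀ i ∈ B, x i ≠ 0) :
    ∃ (v : Valuation K ℤᵐ⁰) (p M : ℕ), p.Prime ∧ p ≠ 2 ∧ v p < 1 ∧ 0 < M ∧
      ∀ i ∈ B, v (x i ^ M - 1) ≤ v p := by
  choose α β hβ hαβ using fun i ↦ IsFractionRing.div_surjective (A := 𝓞 K) (x i)
  have hβ0 (i : ι) : β i ≠ 0 := nonZeroDivisors.ne_zero (hβ i)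
  have hα0 : ∀ i ∈ B, α i ≠ 0 := fun i hi hα ↦ hx i hi (by rw [← hαβ, hα, map_zero, zero_div])
  obtain ⟨p, hp, hp2, hcop⟩ := exists_prime_ne_two_isCoprime
    (Finset.prod_ne_zero_iff.2 fun i hi ↦ mul_ne_zero (hα0 i hi) (hβ0 i))
  obtain ⟨w, hw⟩ := exists_heightOneSpectrum_natCast_mem (K := K) hp
  obtain ⟨M, hM, hdvd⟩ := exists_pow_forall_dvd_pow_sub_one (p := (p : 𝓞 K)) (mod_cast hp.ne_zero)
  refine ⟨w.valuation K, p, M, hp, hp2, ?_, hM, fun i hi ↦ ?_⟩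
  · simpa using (w.valuation_lt_one_iff_mem (K := K) (p : 𝓞 K)).2 hw
  obtain ⟨hα, hβ⟩ := IsCoprime.mul_left_iff.1 (IsCoprime.prod_left_iff.1 hcop i hi)
  have hvβ : w.valuation K (algebraMap (𝓞 K) K (β i)) = 1 := by
    rw [HeightOneSpectrum.valuation_eq_one_iff_notMem]
    intro hmem
    obtain ⟨a, b, hab⟩ := hβ
    exact w.isPrime.ne_top ((Ideal.eq_top_iff_one _).2
      (hab ▸ add_mem (Ideal.mul_mem_left _ _ hmem) (Ideal.mul_mem_left _ _ hw)))
  obtain ⟨r, hr⟩ := dvd_sub (hdvd _ hα) (hdvd _ hβ)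
  have hxM : x i ^ M - 1 = p * algebraMap (𝓞 K) K r / algebraMap (𝓞 K) K (β i) ^ M := by
    have hβK : algebraMap (𝓞 K) K (β i) ≠ 0 := by simpa using hβ0 i
    have hrK := congrArg (algebraMap (𝓞 K) K) hr
    simp only [sub_sub_sub_cancel_right, map_sub, map_pow, map_mul, map_natCast] at hrK
    rw [← hrK, ← hαβ, div_pow, sub_div, div_self (pow_ne_zero _ hβK)]
  rw [hxM, map_div₀, map_pow, hvβ, one_pow, div_one, map_mul]
  exact mul_le_of_le_one_right' (w.valuation_le_one r)

-- The Skolem–Mahler–Lech theorem, with vector-valued coefficients.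
theorem exists_pow_forall_sum_filter_eq_zero {V ι : Type*} [AddCommGroup V] [Module K V]
    [DecidableEq K] {B : Finset ι} {x : ι → K} (hx : ∀ i ∈ B, x i ≠ 0) {T : Set ℕ}
    (hT : T.Infinite) {c : ι → V} (h0 : ∀ n ∈ T, ∑ i ∈ B, x i ^ n • c i = 0) :
    ∃ M > 0, ∃ n ∈ T, ∀ ξ, ∑ i ∈ B with x i ^ M = ξ, x i ^ n • c i = 0 := by
  obtain ⟨v, p, M, hp, hp2, hvp, hM, hxM⟩ := exists_valuation_pow_sub_one_le hx
  obtain ⟨r, hr⟩ := infinite_inter_fiber_of_finite_image (f := (· % M)) hT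
    ((Set.finite_Iio M).subset (by rintro _ ⟨n, -, rfl⟩; exact Nat.mod_lt n hM))
  obtain ⟨n₀, hn₀, hr₀⟩ := hr.nonempty
  have hT' : {k : ℕ | r + M * k ∈ T}.Infinite := fun hfin ↦ hr <|
    (hfin.image fun k ↦ r + M * k).subset fun n ⟨hn, (hnr : n % M = r)⟩ ↦
      ⟨n / M, by simpa [← hnr, Nat.mod_add_div] using hn, by simp [← hnr, Nat.mod_add_div]⟩
  refine ⟨M, hM, n₀, hn₀, fun ξ ↦ (Module.forall_dual_apply_eq_zero_iff K _).1 fun f ↦ ?_⟩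
  have hall := sum_mul_pow_eq_zero_of_infinite (c := fun i ↦ f (c i) * x i ^ r) hp hp2 hvp hxM hT'
    fun k hk ↦ by
      rw [← map_zero f, ← h0 _ hk, map_sum]
      exact Finset.sum_congr rfl fun i _ ↦ by rw [map_smul, smul_eq_mul]; ring
  calc f (∑ i ∈ B with x i ^ M = ξ, x i ^ n₀ • c i)
      = ∑ i ∈ B with x i ^ M = ξ, f (c i) * x i ^ r * ξ ^ (n₀ / M) := by
        rw [map_sum]
        refine Finset.sum_congr rfl fun i hi ↦ ?_
        rw [← (Finset.mem_filter.1 hi).2, map_smul, smul_eq_mul, ← hr₀]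
        conv_lhs => rw [← Nat.mod_add_div n₀ M]
        ring
    _ = 0 := by rw [← Finset.sum_mul, sum_filter_eq_zero_of_sum_mul_pow_eq_zero hall, zero_mul]

end NumberField

/-! ### Torsion from many roots -/

open NumberField in
theorem exists_pow_eq_one_of_forall_exists_pow_eq {K : Type*} [Field K] [NumberField K] {x : K}
    (hx : x ≠ 0) {T : Set ℕ} (hT : T.Infinite) (h : ∀ n ∈ T, ∃ y : K, y ^ n = x) :
    ∃ m > 0, x ^ m = 1 := by
  choose! y hy using h
  have hfin : (y '' (T \ {0})).Finite :=
    (Northcott.finite_le (h := Height.mulHeight₁ (K := K)) (Height.mulHeight₁ x)).subset <| by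
      rintro _ ⟨n, ⟨hn, hn0⟩, rfl⟩
      rw [Set.mem_ofPred_eq, ← hy n hn, Height.mulHeight₁_pow]
      exact le_self_pow₀ (Height.one_le_mulHeight₁ _) hn0
  obtain ⟨a, ha⟩ := infinite_inter_fiber_of_finite_image (hT.sdiff (finite_singleton 0)) hfin
  obtain ⟨n, ⟨hn, hn0⟩, (hna : y n = a)⟩ := ha.nonempty
  obtain ⟨n', ⟨⟨hn', -⟩, (hna' : y n' = a)⟩, hlt⟩ := ha.exists_gt n
  have hax : a ^ n = x := hna ▸ hy n hn
  have hax' : a ^ n' = x := hna' ▸ hy n' hn'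
  have ha1 : a ^ (n' - n) = 1 := by
    rw [pow_sub₀ _ (by rintro rfl; simp_all) hlt.le, hax, hax', mul_inv_cancel₀ hx]
  exact ⟨n' - n, Nat.sub_pos_of_lt hlt, by rw [← hax, ← pow_mul, mul_comm, pow_mul, ha1, one_pow]⟩

section Kummer

variable {F Ω : Type*} [Field F] [Field Ω] [Algebra F Ω] {b : ℕ} [NeZero b] {ζ : Ω}

theorem exists_map_eq_pow_mul (hζ : IsPrimitiveRoot ζ b) {u : Ω} (hu0 : u ≠ 0) {x : F}
    (hu : u ^ b = algebraMap F Ω x) (σ : Gal(Ω/F)) : ∃ i : ℕ, σ u = ζ ^ i * u := by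
  obtain ⟨i, -, hi⟩ := hζ.eq_pow_of_pow_eq_one (ξ := σ u / u) (by
    rw [div_pow, ← map_pow, hu, AlgEquiv.commutes, ← hu, div_self (pow_ne_zero _ hu0)])
  exact ⟨i, by rw [hi, div_mul_cancel₀ _ hu0]⟩

theorem exists_map_eq_pow (hζ : IsPrimitiveRoot ζ b) (σ : Gal(Ω/F)) : ∃ k : ℕ, σ ζ = ζ ^ k := by
  obtain ⟨k, -, hk⟩ := hζ.eq_pow_of_pow_eq_one (ξ := σ ζ) (by
    rw [← map_pow, hζ.pow_eq_one, map_one])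
  exact ⟨k, hk.symm⟩

theorem map_map_comm_of_map_eq_self (hζ : IsPrimitiveRoot ζ b) {u : Ω}
    (hfix : ∀ σ : Gal(Ω/F), σ ζ = ζ → σ u = u) (σ τ : Gal(Ω/F)) : σ (τ u) = τ (σ u) := by
  obtain ⟨k, hk⟩ := exists_map_eq_pow hζ σ
  obtain ⟨l, hl⟩ := exists_map_eq_pow hζ τ
  have hcomm : (σ * τ) ζ = (τ * σ) ζ := by
    simp only [AlgEquiv.mul_apply, hk, hl, map_pow, ← pow_mul, mul_comm]
  have hu := hfix ((τ * σ)⁻¹ * (σ * τ)) (by rw [AlgEquiv.mul_apply, hcomm]; simp)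
  simpa using congr((τ * σ) $hu)

theorem exists_algebraMap_eq_pow_div_map [IsGalois F Ω] (hζ : IsPrimitiveRoot ζ b) {u : Ω}
    (hu0 : u ≠ 0) {x : F} (hu : u ^ b = algebraMap F Ω x)
    (hfix : ∀ σ : Gal(Ω/F), σ ζ = ζ → σ u = u) {σ : Gal(Ω/F)} {k : ℕ} (hσ : σ ζ = ζ ^ k) :
    ∃ a : F, algebraMap F Ω a = u ^ k / σ u := by
  refine (InfiniteGalois.mem_range_algebraMap_iff_fixed _).2 fun τ ↦ ?_
  obtain ⟨i, hi⟩ := exists_map_eq_pow_mul hζ hu0 hu τ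
  have hζi : (ζ ^ k) ^ i ≠ 0 := pow_ne_zero _ (pow_ne_zero _ (hζ.ne_zero (NeZero.ne b)))
  rw [map_div₀, map_pow, ← map_map_comm_of_map_eq_self hζ hfix, hi, map_mul, map_pow, hσ, mul_pow,
    ← pow_mul, mul_comm i, pow_mul, mul_div_mul_left _ _ hζi]

theorem zpow_mem_sup_rootsOfUnity [IsGalois F Ω] (hζ : IsPrimitiveRoot ζ b) {u : Ωˣ} {x : F}
    (hu : (u : Ω) ^ b = algebraMap F Ω x) (hfix : ∀ σ : Gal(Ω/F), σ ζ = ζ → σ (u : Ω) = u)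
    {σ : Gal(Ω/F)} {k : ℕ} (hσ : σ ζ = ζ ^ k) :
    u ^ ((k : ℤ) - 1) ∈ (Units.map (algebraMap F Ω).toMonoidHom).range ⊔ rootsOfUnity b Ω := by
  obtain ⟨a, ha⟩ := exists_algebraMap_eq_pow_div_map hζ u.ne_zero hu hfix hσ
  obtain ⟨i, hi⟩ := exists_map_eq_pow_mul hζ u.ne_zero hu σ
  have hζ0 : ζ ≠ 0 := hζ.ne_zero (NeZero.ne b)
  have ha0 : a ≠ 0 := by
    rintro rfl
    exact div_ne_zero (pow_ne_zero k u.ne_zero) ((map_ne_zero σ).2 u.ne_zero)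
      (ha.symm.trans (map_zero _))
  have hroot : Units.mk0 ζ hζ0 ^ i ∈ rootsOfUnity b Ω :=
    pow_mem ((mem_rootsOfUnity' _ _).2 hζ.pow_eq_one) i
  convert! Subgroup.mul_mem_sup (MonoidHom.mem_range.2 ⟨Units.mk0 a ha0, rfl⟩) hroot
  have hu0 := u.ne_zero
  have hua : (u : Ω) ^ ((k : ℤ) - 1) = algebraMap F Ω a * ζ ^ i := by
    rw [ha, hi, zpow_sub_one₀ hu0, zpow_natCast]
    field_simp
  ext
  simpa using hua

-- The order `e` of `u` modulo `Fˣ` and the `b`-th roots of unity divides both `b` and each `k - 1`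
-- with `σ ζ = ζ ^ k`, so `ζ ^ (b / e)` lies in `F`.
theorem exists_isPrimitiveRoot_and_pow_eq [IsGalois F Ω] (hζ : IsPrimitiveRoot ζ b) {u : Ωˣ} {x : F}
    (hu : (u : Ω) ^ b = algebraMap F Ω x) (hfix : ∀ σ : Gal(Ω/F), σ ζ = ζ → σ (u : Ω) = u) :
    ∃ e > 0, (∃ η : F, IsPrimitiveRoot η e) ∧ ∃ y : F, y ^ b = x ^ e := by
  let H : Subgroup Ωˣ := (Units.map (algebraMap F Ω).toMonoidHom).range ⊔ rootsOfUnity b Ω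
  let e := orderOf (u : Ωˣ ⧸ H)
  have heH (n : ℤ) : (e : ℤ) ∣ n ↔ u ^ n ∈ H := by
    rw [orderOf_dvd_iff_zpow_eq_one, ← QuotientGroup.mk_zpow, QuotientGroup.eq_one_iff]
  have heb : e ∣ b := by
    have hx0 : x ≠ 0 := by
      rintro rfl
      simp [NeZero.ne b] at hu
    rw [← Int.natCast_dvd_natCast, heH]
    exact Subgroup.mem_sup_left ⟨Units.mk0 x hx0, Units.ext (by simp [hu])⟩
  have he : 0 < e := Nat.pos_of_dvd_of_pos heb (NeZero.pos b)
  refine ⟨e, he, ?_, ?_⟩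
  · obtain ⟨q, hq⟩ := heb
    have hprim : IsPrimitiveRoot (ζ ^ q) e := hζ.pow (NeZero.pos b) (by rw [hq, mul_comm])
    have hprim0 := hprim.ne_zero he.ne'
    obtain ⟨η, hη⟩ := (InfiniteGalois.mem_range_algebraMap_iff_fixed (k := F) (ζ ^ q)).2 fun σ ↦ by
      obtain ⟨k, hk⟩ := exists_map_eq_pow hζ σ
      have hk1 := (hprim.zpow_eq_one_iff_dvd _).2
        ((heH _).2 (zpow_mem_sup_rootsOfUnity hζ hu hfix hk))
      rw [zpow_sub_one₀ hprim0, mul_inv_eq_one₀ hprim0, zpow_natCast] at hk1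
      rw [map_pow, hk, ← pow_mul, mul_comm, pow_mul, hk1]
    exact ⟨η, (hη ▸ hprim).of_map_of_injective (algebraMap F Ω).injective⟩
  · obtain ⟨_, ⟨a, rfl⟩, r, hr, har⟩ := Subgroup.mem_sup.1 ((heH e).1 dvd_rfl)
    have hue : (u : Ω) ^ e = algebraMap F Ω a * r := by simpa using congr(($har : Ω)).symm
    refine ⟨a, (algebraMap F Ω).injective ?_⟩
    rw [map_pow, map_pow, ← hu, ← pow_mul, mul_comm b, pow_mul, hue, mul_pow,
      (mem_rootsOfUnity' _ _).1 hr, mul_one]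

open NumberField in
theorem exists_pow_eq_pow_torsionOrder [NumberField F] [IsGalois F Ω]
    (hζ : IsPrimitiveRoot ζ b) {u : Ωˣ} {x : F} (hu : (u : Ω) ^ b = algebraMap F Ω x)
    (hfix : ∀ σ : Gal(Ω/F), σ ζ = ζ → σ (u : Ω) = u) :
    ∃ y : F, y ^ b = x ^ Units.torsionOrder F := by
  obtain ⟨e, he, ⟨η, hη⟩, y, hy⟩ := exists_isPrimitiveRoot_and_pow_eq hζ hu hfix
  have : NeZero e := ⟨he.ne'⟩
  obtain ⟨q, hq⟩ := Units.dvd_torsionOrder_of_isPrimitiveRoot hη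
  exact ⟨y ^ q, by rw [hq, pow_mul, ← hy, ← pow_mul, ← pow_mul, mul_comm]⟩

end Kummer

section KummerCharacter

variable {F Ω : Type*} [Field F] [Field Ω] [Algebra F Ω] {b : ℕ} [NeZero b] {ζ : Ω}

/-- The character `σ ↦ σ u / u` of the stabilizer of a primitive `b`-th root of unity `ζ` attached
to a `b`-th root `u` of an element of the base field. -/
def kummerCharacter (hζ : IsPrimitiveRoot ζ b) {u : Ω} (hu0 : u ≠ 0) {x : F}
    (hu : u ^ b = algebraMap F Ω x) : MulAction.stabilizer Gal(Ω/F) ζ →* Ω where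
  toFun σ := (σ : Gal(Ω/F)) u / u
  map_one' := by simp [hu0]
  map_mul' := by
    rintro ⟨σ, hσ : σ ζ = ζ⟩ ⟨τ, -⟩
    obtain ⟨i, hi⟩ := exists_map_eq_pow_mul hζ hu0 hu τ
    simp only [Subgroup.coe_mul, AlgEquiv.mul_apply, hi, map_mul, map_pow, hσ]
    field_simp

variable {ι : Type*} {B : Finset ι} {y : ι → Ω} {x : ι → F}

theorem sum_filter_kummerCharacter_eq_zero {V : Type*} [AddCommGroup V] [Module Ω V]
    [DecidableEq (MulAction.stabilizer Gal(Ω/F) ζ →* Ω)] (hζ : IsPrimitiveRoot ζ b)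
    (hy0 : ∀ i, y i ≠ 0) (hy : ∀ i, y i ^ b = algebraMap F Ω (x i)) {v : ι → V}
    (h : ∀ σ : Gal(Ω/F), ∑ i ∈ B, σ (y i) • v i = 0) (φ : MulAction.stabilizer Gal(Ω/F) ζ →* Ω) :
    ∑ i ∈ B with kummerCharacter hζ (hy0 i) (hy i) = φ, y i • v i = 0 := by
  refine (Module.forall_dual_apply_eq_zero_iff Ω _).1 fun f ↦ ?_
  simp only [map_sum, map_smul, smul_eq_mul]
  refine sum_filter_eq_zero_of_linearIndependent (linearIndependent_monoidHom _ Ω) ?_ φ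
  funext σ
  rw [Pi.zero_apply, ← map_zero f, ← h σ, map_sum, Finset.sum_apply]
  refine Finset.sum_congr rfl fun i _ ↦ ?_
  have := hy0 i
  simp only [kummerCharacter, MonoidHom.coe_mk, OneHom.coe_mk, Pi.smul_apply, smul_eq_mul, map_smul]
  field_simp

theorem IsMinimalVanishing.map_div_eq [Module Ω ℂ] (hζ : IsPrimitiveRoot ζ b)
    (hy0 : ∀ i, y i ≠ 0) (hy : ∀ i, y i ^ b = algebraMap F Ω (x i)) {c : ι → ℂ}
    (hmin : IsMinimalVanishing B fun i ↦ y i • c i)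
    (h : ∀ σ : Gal(Ω/F), ∑ i ∈ B, σ (y i) • c i = 0) {i j : ι} (hi : i ∈ B) (hj : j ∈ B)
    {σ : Gal(Ω/F)} (hσ : σ ζ = ζ) : σ (y i) / y i = σ (y j) / y j := by
  classical
  have hχ := hmin.eq_of_sum_filter_eq_zero (sum_filter_kummerCharacter_eq_zero hζ hy0 hy h) hi hj
  exact DFunLike.congr_fun hχ ⟨σ, hσ⟩

open NumberField in
theorem exists_pow_eq_pow_torsionOrder_of_isCoprime [NumberField F] [IsGalois F Ω]
    (hζ : IsPrimitiveRoot ζ b) {n : ℤ} (hn : IsCoprime n b) {x : F} (hx : x ≠ 0) {y : Ω}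
    (hy : y ^ b = algebraMap F Ω (x ^ n)) (hfix : ∀ σ : Gal(Ω/F), σ ζ = ζ → σ y = y) :
    ∃ z : F, z ^ b = x ^ Units.torsionOrder F := by
  obtain ⟨α, β, hαβ⟩ := hn
  have hx0 : algebraMap F Ω x ≠ 0 := (map_ne_zero _).2 hx
  have hy0 : y ≠ 0 := by
    rintro rfl
    rw [zero_pow (NeZero.ne b)] at hy
    exact (map_ne_zero _).2 (zpow_ne_zero n hx) hy.symm
  refine exists_pow_eq_pow_torsionOrder hζ (u := Units.mk0 y hy0 ^ α * Units.mk0 _ hx0 ^ β) ?_ ?_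
  · simp only [Units.val_mul, Units.val_zpow_eq_zpow_val, Units.val_mk0]
    rw [mul_pow, ← zpow_natCast, ← zpow_natCast, ← zpow_mul, ← zpow_mul, mul_comm α, zpow_mul,
      zpow_natCast, hy, map_zpow₀, ← zpow_mul, ← zpow_add₀ hx0, mul_comm n, hαβ, zpow_one]
  · intro σ hσ
    simp [hfix σ hσ]

end KummerCharacter

-- The coordinates of the `v i` in a basis of `V` form such a set.
theorem exists_finite_forall_sum_map_smul_eq_zero {Ω V ι : Type*} [Field Ω] [AddCommGroup V]
    [Module Ω V] (B : Finset ι) (v : ι → V) :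
    ∃ s : Set Ω, s.Finite ∧ ∀ σ : Ω →+* Ω, (∀ a ∈ s, σ a = a) → ∀ y : ι → Ω,
      ∑ i ∈ B, y i • v i = 0 → ∑ i ∈ B, σ (y i) • v i = 0 := by
  let bs := Module.Basis.ofVectorSpace Ω V
  refine ⟨⋃ i ∈ B, range (bs.repr (v i)),
    B.finite_toSet.biUnion fun i _ ↦ (bs.repr (v i)).finite_range, fun σ hσ y hy ↦ ?_⟩
  refine bs.ext_elem fun k ↦ ?_
  have hk := congr(σ (bs.repr $hy k))
  simp only [map_sum, map_smul, map_zero, Finsupp.finsetSum_apply, Finsupp.smul_apply, smul_eq_mul,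
    map_mul, Finsupp.coe_zero, Pi.zero_apply] at hk ⊢
  rw [← hk]
  refine Finset.sum_congr rfl fun i hi ↦ ?_
  rw [hσ _ (mem_biUnion hi (mem_range_self k))]

theorem numberField_adjoin {L : Type*} [Field L] [CharZero L] {s : Set L} (hs : s.Finite)
    (halg : ∀ a ∈ s, IsAlgebraic ℚ a) : NumberField (IntermediateField.adjoin ℚ s) where
  to_finiteDimensional :=
    have : Finite s := hs
    IntermediateField.finiteDimensional_adjoin fun a ha ↦ (halg a ha).isIntegral

theorem exp_mul_ratCast_pow_den (ν : ℂ) (q : ℚ) : exp (ν * q) ^ q.den = exp ν ^ q.num := by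
  rw [← exp_nat_mul, ← exp_int_mul]
  have hq : (q : ℂ) * q.den = q.num := mod_cast Rat.mul_den_eq_num q
  congr 1
  linear_combination ν * hq

theorem isAlgebraic_exp_mul_ratCast {ν : ℂ} (h : IsAlgebraic ℚ (exp ν)) (q : ℚ) :
    IsAlgebraic ℚ (exp (ν * q)) := by
  refine IsAlgebraic.of_pow q.den_pos (exp_mul_ratCast_pow_den ν q ▸ ?_)
  rw [← mem_algebraicClosure_iff] at h ⊢
  exact zpow_mem h _

section Torsion

variable {ι : Type*} {B : Finset ι} {c : ι → ℂ}

open NumberField in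
theorem IsMinimalVanishing.exists_pow_eq_one_of_infinite_den {Ω : Type*} [Field Ω] [CharZero Ω]
    [IsAlgClosed Ω] [Algebra.IsAlgebraic ℚ Ω] [Module Ω ℂ] [Finite ι] {x : ι → Ω}
    (hx0 : ∀ i, x i ≠ 0) {y : ℚ → ι → Ω} (hy : ∀ q i, y q i ^ q.den = x i ^ q.num)
    {T : Set ℚ} (hT : (Rat.den '' T).Infinite)
    (hmin : ∀ q ∈ T, IsMinimalVanishing B fun i ↦ y q i • c i)
    {i j : ι} (hi : i ∈ B) (hj : j ∈ B) (hyj : ∀ q, y q j = 1) : ∃ m > 0, x i ^ m = 1 := by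
  obtain ⟨s, hs, hsσ⟩ := exists_finite_forall_sum_map_smul_eq_zero (Ω := Ω) B c
  let F := IntermediateField.adjoin ℚ (s ∪ range x)
  have : NumberField F := numberField_adjoin (hs.union (finite_range x)) fun a _ ↦
    Algebra.IsAlgebraic.isAlgebraic a
  have : Algebra.IsAlgebraic F Ω := Algebra.IsAlgebraic.tower_top (K := ℚ) F
  have : IsAlgClosure F Ω := ⟨inferInstance, inferInstance⟩
  have : IsGalois F Ω := IsAlgClosure.isGalois F Ω
  let x' (i : ι) : F := ⟨x i, IntermediateField.subset_adjoin _ _ (.inr (mem_range_self i))⟩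
  have hx' (i) : algebraMap F Ω (x' i) = x i := rfl
  have hx0' : x' i ≠ 0 := fun h ↦ hx0 i congr(($h : Ω))
  have hy0 (q i) : y q i ≠ 0 := fun h ↦ zpow_ne_zero q.num (hx0 i) (by
    rw [← hy, h, zero_pow q.den_ne_zero])
  have hroots : ∀ n ∈ Rat.den '' T, ∃ z : F, z ^ n = x' i ^ Units.torsionOrder F := by
    rintro _ ⟨q, hq, rfl⟩
    have : NeZero q.den := ⟨q.den_ne_zero⟩
    obtain ⟨ζ, hζ⟩ := HasEnoughRootsOfUnity.exists_primitiveRoot Ω q.den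
    have hyx (i) : y q i ^ q.den = algebraMap F Ω (x' i ^ q.num) := by rw [hy, map_zpow₀, hx']
    refine exists_pow_eq_pow_torsionOrder_of_isCoprime hζ
      (Int.isCoprime_iff_gcd_eq_one.2 q.reduced) hx0' (hyx i) fun σ hσ ↦ ?_
    have hdiv := (hmin q hq).map_div_eq hζ (hy0 q) hyx (fun σ ↦ hsσ σ (fun a ha ↦
      σ.commutes ⟨a, IntermediateField.subset_adjoin _ _ (.inl ha)⟩) _ (hmin q hq).2.1) hi hj hσ
    rwa [hyj, map_one, div_one, div_eq_one_iff_eq (hy0 q i)] at hdiv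
  obtain ⟨m, hm, hm1⟩ := exists_pow_eq_one_of_forall_exists_pow_eq (pow_ne_zero _ hx0') hT hroots
  refine ⟨Units.torsionOrder F * m, Nat.mul_pos (Units.torsionOrder_pos F) hm, ?_⟩
  rw [← hx', ← map_pow, pow_mul, hm1, map_one]

theorem IsMinimalVanishing.exists_exp_pow_eq_one_of_infinite_den [Finite ι] {ν : ι → ℂ}
    (hν : ∀ i, IsAlgebraic ℚ (exp (ν i))) {T : Set ℚ} (hT : (Rat.den '' T).Infinite)
    (hmin : ∀ q ∈ T, IsMinimalVanishing B fun i ↦ c i * exp (ν i * q))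
    {i j : ι} (hi : i ∈ B) (hj : j ∈ B) (hνj : ν j = 0) : ∃ m > 0, exp (ν i) ^ m = 1 := by
  have hcl : IsAlgClosure ℚ (algebraicClosure ℚ ℂ) := algebraicClosure.isAlgClosure ℚ ℂ
  have := hcl.isAlgClosed
  have := hcl.isAlgebraic
  let x (i : ι) : algebraicClosure ℚ ℂ := ⟨exp (ν i), mem_algebraicClosure_iff.2 (hν i)⟩
  let y (q : ℚ) (i : ι) : algebraicClosure ℚ ℂ :=
    ⟨exp (ν i * q), mem_algebraicClosure_iff.2 (isAlgebraic_exp_mul_ratCast (hν i) q)⟩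
  have hyx (q i) : y q i ^ q.den = x i ^ q.num :=
    Subtype.ext <| (exp_mul_ratCast_pow_den (ν i) q).trans
      (map_zpow₀ (algebraicClosure ℚ ℂ).val (x i) _).symm
  have hyc (q i) : y q i • c i = c i * exp (ν i * q) := mul_comm _ _
  obtain ⟨m, hm, hm1⟩ := exists_pow_eq_one_of_infinite_den (x := x) (y := y) (c := c)
    (fun i h ↦ exp_ne_zero (ν i) congr(($h : ℂ))) hyx hT
    (fun q hq ↦ by simpa only [hyc] using hmin q hq) hi hj
    (fun q ↦ Subtype.ext (by simp [y, hνj]))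
  exact ⟨m, hm, congr(($hm1 : ℂ))⟩

theorem IsMinimalVanishing.exists_pow_eq_pow [Finite ι] {x : ι → ℂ} (hx0 : ∀ i, x i ≠ 0)
    (hx : ∀ i, IsAlgebraic ℚ (x i)) {T : Set ℕ} (hT : T.Infinite)
    (hmin : ∀ n ∈ T, IsMinimalVanishing B fun i ↦ c i * x i ^ n) {i j : ι} (hi : i ∈ B)
    (hj : j ∈ B) : ∃ m > 0, x i ^ m = x j ^ m := by
  classical
  let K := IntermediateField.adjoin ℚ (range x)
  have : NumberField K := numberField_adjoin (finite_range x) (forall_mem_range.2 hx)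
  let x' (i : ι) : K := ⟨x i, IntermediateField.subset_adjoin _ _ (mem_range_self i)⟩
  have hsmul (n i) : x' i ^ n • c i = c i * x i ^ n := mul_comm _ _
  obtain ⟨m, hm, n, hn, hfilter⟩ := exists_pow_forall_sum_filter_eq_zero (x := x') (c := c)
    (fun i _ h ↦ hx0 i congr(($h : ℂ))) hT (fun n hn ↦ by simpa only [hsmul] using (hmin n hn).2.1)
  simp only [hsmul] at hfilter
  exact ⟨m, hm, congr(($((hmin n hn).eq_of_sum_filter_eq_zero hfilter hi hj) : ℂ))⟩

theorem exists_infinite_setOf_natCast_mul_mem {T : Set ℚ} (hT : T.Infinite)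
    (hden : (Rat.den '' T).Finite) : ∃ r : ℚ, r ≠ 0 ∧ {n : ℕ | (n : ℚ) * r ∈ T}.Infinite := by
  let f (q : ℚ) : ℚ := q.num.sign / q.den
  have hf (q : ℚ) : q.num.natAbs * f q = q := by
    have hnum : (q.num.sign : ℚ) * q.num.natAbs = q.num := by
      rw [← Int.cast_natCast, ← Int.cast_mul, Int.sign_mul_natAbs]
    rw [mul_div_assoc', mul_comm, hnum, Rat.num_div_den]
  have hfin : (f '' T).Finite := by
    refine (((finite_Icc (-1 : ℤ) 1).prod hden).image fun p ↦ (p.1 / p.2 : ℚ)).subset ?_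
    rintro _ ⟨q, hq, rfl⟩
    refine ⟨(q.num.sign, q.den), ⟨?_, mem_image_of_mem _ hq⟩, rfl⟩
    obtain h | h | h := Int.sign_trichotomy q.num <;> simp [h]
  obtain ⟨r, hr⟩ := infinite_inter_fiber_of_finite_image hT hfin
  refine ⟨r, ?_, Infinite.of_image (fun n : ℕ ↦ (n : ℚ) * r) (hr.mono ?_)⟩
  · rintro rfl
    refine hr ((finite_singleton 0).subset ?_)
    rintro q ⟨-, hq : f q = 0⟩
    rw [mem_singleton_iff, ← hf q, hq, mul_zero]
  · rintro q ⟨hq, rfl⟩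
    exact ⟨q.num.natAbs, by simpa only [Set.mem_ofPred_eq, hf] using hq, hf q⟩

theorem IsMinimalVanishing.exists_exp_pow_eq_one [Finite ι] {ν : ι → ℂ}
    (hν : ∀ i, IsAlgebraic ℚ (exp (ν i))) {T : Set ℚ} (hT : T.Infinite)
    (hmin : ∀ q ∈ T, IsMinimalVanishing B fun i ↦ c i * exp (ν i * q))
    {i j : ι} (hi : i ∈ B) (hj : j ∈ B) (hνj : ν j = 0) : ∃ m > 0, exp (ν i) ^ m = 1 := by
  by_cases hden : (Rat.den '' T).Infinite
  · exact exists_exp_pow_eq_one_of_infinite_den hν hden hmin hi hj hνj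
  obtain ⟨r, hr0, hr⟩ := exists_infinite_setOf_natCast_mul_mem hT (not_infinite.1 hden)
  obtain ⟨m, hm, hm1⟩ := exists_pow_eq_pow (x := fun i ↦ exp (ν i * r)) (fun i ↦ exp_ne_zero _)
    (fun i ↦ isAlgebraic_exp_mul_ratCast (hν i) r) hr (fun n hn ↦ by
      simpa only [Rat.cast_mul, Rat.cast_natCast, ← exp_nat_mul, mul_left_comm (n : ℂ)]
        using hmin _ hn) hi hj
  have hnum : (exp (ν i) ^ m) ^ r.num = 1 := by
    rw [← zpow_natCast, zpow_comm, ← exp_mul_ratCast_pow_den, zpow_natCast, pow_right_comm, hm1]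
    simp [hνj]
  refine ⟨m * r.num.natAbs, Nat.mul_pos hm (Int.natAbs_pos.2 (Rat.num_ne_zero.2 hr0)), ?_⟩
  obtain ⟨n, hn | hn⟩ := r.num.eq_nat_or_neg <;> simpa [pow_mul, hn] using hnum

theorem IsMinimalVanishing.of_eq_mul {w w' : ι → ℂ} (h : IsMinimalVanishing B w) {a : ℂ}
    (ha : a ≠ 0) (hw : ∀ i ∈ B, w' i = a * w i) : IsMinimalVanishing B w' := by
  have hsum {A : Finset ι} (hA : A ⊆ B) : ∑ i ∈ A, w' i = a * ∑ i ∈ A, w i := by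
    rw [Finset.mul_sum]
    exact Finset.sum_congr rfl fun i hi ↦ hw i (hA hi)
  refine ⟨h.1, by rw [hsum subset_rfl, h.2.1, mul_zero], fun A hA hne hAB ↦ ?_⟩
  rw [hsum hA]
  exact mul_ne_zero ha (h.2.2 A hA hne hAB)

theorem IsMinimalVanishing.attach {w : ι → ℂ} (h : IsMinimalVanishing B w) :
    IsMinimalVanishing B.attach fun i ↦ w i := by
  classical
  refine ⟨h.1.attach, (Finset.sum_attach B w).trans h.2.1, fun A _ hne hA ↦ ?_⟩
  have hmap := h.2.2 (A.map (.subtype _)) (fun i hi ↦ Finset.property_of_mem_map_subtype A hi)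
    hne.map fun hAB ↦ hA <| Finset.map_injective _ <|
      hAB.trans B.attach_map_val.symm
  simpa using hmap

theorem IsMinimalVanishing.exists_exp_sub_pow_eq_one {ν : ι → ℂ}
    (hν : ∀ i ∈ B, ∀ j ∈ B, IsAlgebraic ℚ (exp (ν i - ν j))) {T : Set ℚ} (hT : T.Infinite)
    (hmin : ∀ q ∈ T, IsMinimalVanishing B fun i ↦ c i * exp (ν i * q)) {i j : ι} (hi : i ∈ B)
    (hj : j ∈ B) : ∃ m > 0, exp (ν i - ν j) ^ m = 1 := by
  refine exists_exp_pow_eq_one (B := B.attach) (ν := fun k ↦ ν k - ν j) (c := fun k ↦ c k)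
    (fun k ↦ hν k k.2 j hj) hT (fun q hq ↦ ?_) (B.mem_attach ⟨i, hi⟩) (B.mem_attach ⟨j, hj⟩)
    (sub_self _)
  refine IsMinimalVanishing.attach (w := fun k ↦ c k * exp ((ν k - ν j) * q)) <|
    (hmin q hq).of_eq_mul (exp_ne_zero (-(ν j * q))) fun k _ ↦ ?_
  rw [mul_left_comm, ← exp_add, sub_mul, neg_add_eq_sub]

end Torsion

/-! ### A common frequency for the blocks of vanishing sums -/

section Blocks

variable {ι : Type*} {c μ : ι → ℂ} {S : Set ℂ}

theorem exists_finpartition_isMinimalVanishing {M : Type*} [AddCommGroup M] [DecidableEq ι]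
    {w : ι → M} (B : Finset ι) (hB : ∑ i ∈ B, w i = 0) :
    ∃ P : Finpartition B, ∀ A ∈ P.parts, IsMinimalVanishing A w := by
  induction B using Finset.strongInduction with
  | H B ih =>
    obtain rfl | hne := B.eq_empty_or_nonempty
    · exact ⟨⊥, by simp⟩
    obtain ⟨A, hAB, ⟨hAne, hA⟩, hAmin⟩ := exists_minimal_le_of_wellFoundedLT
      (fun A : Finset ι ↦ A.Nonempty ∧ ∑ i ∈ A, w i = 0) B ⟨hne, hB⟩
    obtain ⟨P, hP⟩ := ih (B \ A) (Finset.sdiff_ssubset hAB hAne) <| by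
      rw [Finset.sum_sdiff_eq_sub hAB, hB, hA, sub_zero]
    refine ⟨P.extend hAne.ne_empty disjoint_sdiff_self_left (sdiff_sup_cancel hAB), ?_⟩
    simp only [Finpartition.extend_parts, Finset.mem_insert, forall_eq_or_imp]
    exact ⟨⟨hAne, hA, fun A' hA' hne' hneq h0 ↦ hneq (hA'.antisymm (hAmin ⟨hne', h0⟩ hA'))⟩, hP⟩

theorem exists_infinite_subset_finpartition {α M : Type*} [AddCommGroup M] [DecidableEq ι]
    {w : ι → α → M} {S : Set α} (hS : S.Infinite) {B : Finset ι}
    (hB : ∀ z ∈ S, ∑ i ∈ B, w i z = 0) :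
    ∃ S' ⊆ S, S'.Infinite ∧ ∃ P : Finpartition B, ∀ A ∈ P.parts, ∀ z ∈ S',
      IsMinimalVanishing A fun i ↦ w i z := by
  choose! P hP using fun z hz ↦ exists_finpartition_isMinimalVanishing B (hB z hz)
  obtain ⟨P₀, hS'⟩ := infinite_inter_fiber_of_finite_image hS (toFinite (P '' S))
  refine ⟨_, inter_subset_left, hS', P₀, ?_⟩
  rintro A hA z ⟨hz, rfl⟩
  exact hP z hz A hA

theorem IsMinimalVanishing.exists_exp_sub_mul_pow_eq_one {z₀ d : ℂ}
    (hS : {q : ℚ | z₀ + q * d ∈ S}.Infinite) {B : Finset ι}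
    (halg : ∀ i ∈ B, ∀ j ∈ B, IsAlgebraic ℚ (exp ((μ i - μ j) * d)))
    (hmin : ∀ z ∈ S, IsMinimalVanishing B fun i ↦ c i * exp (μ i * z)) {i j : ι} (hi : i ∈ B)
    (hj : j ∈ B) : ∃ m > 0, exp ((μ i - μ j) * d) ^ m = 1 := by
  rw [sub_mul]
  refine exists_exp_sub_pow_eq_one (c := fun i ↦ c i * exp (μ i * z₀)) (ν := fun i ↦ μ i * d)
    (fun i hi j hj ↦ by simpa only [sub_mul] using halg i hi j hj) hS (fun q hq ↦ ?_) hi hj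
  convert hmin _ hq using 2 with k
  rw [mul_assoc, ← exp_add]
  ring_nf

theorem infinite_setOf_add_ratCast_mul_mem (hS : S.Infinite) {z₀ d : ℂ}
    (h : ∀ z ∈ S, z - z₀ ∈ Submodule.span ℚ {d}) : {q : ℚ | z₀ + q * d ∈ S}.Infinite := by
  refine Infinite.of_image (fun q : ℚ ↦ z₀ + q * d) (hS.mono fun z hz ↦ ?_)
  obtain ⟨q, hq⟩ := Submodule.mem_span_singleton.1 (h z hz)
  have hz' : z₀ + q * d = z := by rw [← Rat.smul_def, hq, add_sub_cancel]
  exact ⟨q, by simpa only [Set.mem_ofPred_eq, hz'] using hz, hz'⟩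

theorem mem_span_rat_of_exp_pow_eq_one {u v : ℂ} (hu : u ≠ 0) {m n : ℕ} (hm : m ≠ 0) (hn : n ≠ 0)
    (hum : exp u ^ m = 1) (hvn : exp v ^ n = 1) : v ∈ Submodule.span ℚ {u} := by
  rw [← exp_nat_mul, exp_eq_one_iff] at hum hvn
  obtain ⟨k, hk⟩ := hum
  obtain ⟨l, hl⟩ := hvn
  have hk0 : (k : ℂ) ≠ 0 := by
    intro hk0
    rw [hk0, zero_mul] at hk
    exact mul_ne_zero (Nat.cast_ne_zero.2 hm) hu hk
  refine Submodule.mem_span_singleton.2 ⟨(l * m) / (n * k), ?_⟩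
  rw [Rat.smul_def]
  push_cast
  field_simp
  linear_combination l * hk - k * hl

theorem SchanuelConjecture.sub_mem_span_of_isMinimalVanishing (hSC : SchanuelConjecture)
    (hS : S.Infinite) (W : Submodule ℚ ℂ) [FiniteDimensional ℚ W] {A B : Finset ι}
    (hA : ∀ z ∈ S, IsMinimalVanishing A fun i ↦ c i * exp (μ i * z))
    (hB : ∀ z ∈ S, IsMinimalVanishing B fun i ↦ c i * exp (μ i * z))
    (hWA : ∀ z ∈ S, ∀ i ∈ A, ∀ j ∈ A, (μ i - μ j) * z ∈ W)
    (hWB : ∀ z ∈ S, ∀ i ∈ B, ∀ j ∈ B, (μ i - μ j) * z ∈ W) {i i' j j' : ι}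
    (hi : i ∈ A) (hi' : i' ∈ A) (hj : j ∈ B) (hj' : j' ∈ B) (hne : μ i - μ i' ≠ 0) :
    μ j - μ j' ∈ Submodule.span ℚ {μ i - μ i'} := by
  obtain ⟨S₁, hS₁S, hS₁, halgA⟩ := exists_infinite_subset_isAlgebraic_exp_sub W
    (w := fun i z ↦ μ i * z) hS
    (fun i hi j hj z hz ↦ by simpa only [sub_mul] using hWA z hz i hi j hj) hA
  obtain ⟨S₂, hS₂S₁, hS₂, halgB⟩ := exists_infinite_subset_isAlgebraic_exp_sub W
    (w := fun i z ↦ μ i * z) hS₁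
    (fun i hi j hj z hz ↦ by simpa only [sub_mul] using hWB z (hS₁S hz) i hi j hj)
    fun z hz ↦ hB z (hS₁S hz)
  simp only [← sub_mul, ← mul_sub] at halgA halgB
  obtain ⟨z₀, hz₀⟩ := hS₂.nonempty
  obtain ⟨z₁, hz₁, hz₁₀⟩ := hS₂.nontrivial.exists_ne z₀
  by_contra hspan
  have hline : ∀ z ∈ S₂, z - z₀ ∈ Submodule.span ℚ {z₁ - z₀} := by
    intro z hz
    by_contra hz'
    exact hSC.four_exponentials hne (sub_ne_zero.2 hz₁₀) hspan hz'
      (halgA _ (hS₂S₁ hz₁) _ (hS₂S₁ hz₀) _ hi _ hi') (halgA _ (hS₂S₁ hz) _ (hS₂S₁ hz₀) _ hi _ hi')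
      (halgB _ hz₁ _ hz₀ _ hj _ hj') (halgB _ hz _ hz₀ _ hj _ hj')
  have hT := infinite_setOf_add_ratCast_mul_mem hS₂ hline
  obtain ⟨m, hm, hm1⟩ := IsMinimalVanishing.exists_exp_sub_mul_pow_eq_one hT
    (halgA _ (hS₂S₁ hz₁) _ (hS₂S₁ hz₀)) (fun z hz ↦ hA z (hS₁S (hS₂S₁ hz))) hi hi'
  obtain ⟨n, hn, hn1⟩ := IsMinimalVanishing.exists_exp_sub_mul_pow_eq_one hT
    (halgB _ hz₁ _ hz₀) (fun z hz ↦ hB z (hS₁S (hS₂S₁ hz))) hj hj'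
  have hd := sub_ne_zero.2 hz₁₀
  obtain ⟨q, hq⟩ := Submodule.mem_span_singleton.1 <|
    mem_span_rat_of_exp_pow_eq_one (mul_ne_zero hne hd) hm.ne' hn.ne' hm1 hn1
  rw [← smul_mul_assoc] at hq
  exact hspan (Submodule.mem_span_singleton.2 ⟨q, mul_right_cancel₀ hd hq⟩)

theorem exists_forall_eq_intCast_mul (Δ : Finset ℂ)
    (hΔ : ∀ x ∈ Δ, x ≠ 0 → ∀ y ∈ Δ, y ∈ Submodule.span ℚ {x}) :
    ∃ a ≠ 0, ∀ y ∈ Δ, ∃ m : ℤ, y = m * a := by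
  by_cases h0 : ∀ x ∈ Δ, x = 0
  · exact ⟨1, one_ne_zero, fun y hy ↦ ⟨0, by simp [h0 y hy]⟩⟩
  push Not at h0
  obtain ⟨x, hx, hx0⟩ := h0
  choose! q hq using fun y hy ↦ Submodule.mem_span_singleton.1 (hΔ x hx hx0 y hy)
  obtain ⟨⟨d, hd⟩, hdq⟩ := IsLocalization.exist_integer_multiples (nonZeroDivisors ℤ) Δ q
  have hd0 : (d : ℂ) ≠ 0 := Int.cast_ne_zero.2 (nonZeroDivisors.ne_zero hd)
  refine ⟨x / d, div_ne_zero hx0 hd0, fun y hy ↦ ?_⟩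
  obtain ⟨m, hm⟩ := hdq y hy
  have hmd : (m : ℂ) = d * q y := by simpa using congr(($hm : ℂ))
  refine ⟨m, ?_⟩
  rw [← hq y hy, hmd, Rat.smul_def]
  field_simp

theorem SchanuelConjecture.exists_common_frequency (hSC : SchanuelConjecture) (hS : S.Infinite)
    (W : Submodule ℚ ℂ) [FiniteDimensional ℚ W] (𝒜 : Finset (Finset ι))
    (hmin : ∀ A ∈ 𝒜, ∀ z ∈ S, IsMinimalVanishing A fun i ↦ c i * exp (μ i * z))
    (hW : ∀ A ∈ 𝒜, ∀ z ∈ S, ∀ i ∈ A, ∀ j ∈ A, (μ i - μ j) * z ∈ W) :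
    ∃ a ≠ 0, ∀ A ∈ 𝒜, ∀ i ∈ A, ∀ j ∈ A, ∃ m : ℤ, μ i - μ j = m * a := by
  classical
  let Δ : Finset ℂ := 𝒜.biUnion fun A ↦ (A ×ˢ A).image fun p ↦ μ p.1 - μ p.2
  have hΔ {x : ℂ} : x ∈ Δ ↔ ∃ A ∈ 𝒜, ∃ i ∈ A, ∃ j ∈ A, μ i - μ j = x := by
    simp [Δ, and_assoc]
  obtain ⟨a, ha0, ha⟩ := exists_forall_eq_intCast_mul Δ fun x hx hx0 y hy ↦ by
    obtain ⟨A, hA, i, hi, i', hi', rfl⟩ := hΔ.1 hx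
    obtain ⟨B, hB, j, hj, j', hj', rfl⟩ := hΔ.1 hy
    exact hSC.sub_mem_span_of_isMinimalVanishing hS W (hmin A hA) (hmin B hB) (hW A hA) (hW B hB)
      hi hi' hj hj' hx0
  exact ⟨a, ha0, fun A hA i hi j hj ↦ ha _ (hΔ.2 ⟨A, hA, i, hi, j, hj, rfl⟩)⟩

end Blocks

/-! ### The ring of exponential polynomials -/

theorem isExpPoly_sum_mul_exp {ι : Type*} [Fintype ι] (c μ : ι → ℂ) :
    IsExpPoly fun z ↦ ∑ i, c i * exp (μ i * z) :=
  ⟨Fintype.card ι, c ∘ (Fintype.equivFin ι).symm, μ ∘ (Fintype.equivFin ι).symm, fun z ↦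
    (Equiv.sum_comp (Fintype.equivFin ι).symm fun i ↦ c i * exp (μ i * z)).symm⟩

theorem isExpPoly_mul_exp (c μ : ℂ) : IsExpPoly fun z ↦ c * exp (μ * z) := by
  simpa using isExpPoly_sum_mul_exp (fun _ : Unit ↦ c) fun _ ↦ μ

theorem isExpPoly_exp (μ : ℂ) : IsExpPoly fun z ↦ exp (μ * z) := by
  simpa using isExpPoly_mul_exp 1 μ

theorem isExpPoly_const (c : ℂ) : IsExpPoly fun _ ↦ c := by
  simpa using isExpPoly_mul_exp c 0

theorem IsExpPoly.add {f g : ℂ → ℂ} (hf : IsExpPoly f) (hg : IsExpPoly g) : IsExpPoly (f + g) := by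
  obtain ⟨N, c, μ, hf⟩ := hf
  obtain ⟨N', c', μ', hg⟩ := hg
  convert isExpPoly_sum_mul_exp (Sum.elim c c') (Sum.elim μ μ')
  simp [hf, hg]

theorem IsExpPoly.mul {f g : ℂ → ℂ} (hf : IsExpPoly f) (hg : IsExpPoly g) : IsExpPoly (f * g) := by
  obtain ⟨N, c, μ, hf⟩ := hf
  obtain ⟨N', c', μ', hg⟩ := hg
  convert isExpPoly_sum_mul_exp (fun p : Fin N × Fin N' ↦ c p.1 * c' p.2) fun p ↦ μ p.1 + μ' p.2
    with z
  simp only [Pi.mul_apply, hf, hg, Finset.sum_mul_sum, Fintype.sum_prod_type, add_mul, exp_add,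
    mul_mul_mul_comm]

/-- The ring `𝓔` as a subalgebra of the functions `ℂ → ℂ`, giving it the closure properties of
subalgebras, such as closure under finite sums. -/
def expPolySubalgebra : Subalgebra ℂ (ℂ → ℂ) where
  carrier := {f | IsExpPoly f}
  mul_mem' := IsExpPoly.mul
  add_mem' := IsExpPoly.add
  algebraMap_mem' := isExpPoly_const

theorem EDvd.sum {κ : Type*} {s : Finset κ} {h : ℂ → ℂ} {F : κ → ℂ → ℂ}
    (hF : ∀ k ∈ s, EDvd h (F k)) : EDvd h (∑ k ∈ s, F k) := by
  choose! q hq hFq using hF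
  exact ⟨∑ k ∈ s, q k, sum_mem (S := expPolySubalgebra) hq,
    (Finset.sum_congr rfl hFq).trans (Finset.mul_sum ..).symm⟩

theorem EDvd.mul_right {h f g : ℂ → ℂ} (hf : EDvd h f) (hg : IsExpPoly g) : EDvd h (f * g) := by
  obtain ⟨q, hq, rfl⟩ := hf
  exact ⟨q * g, hq.mul hg, mul_assoc h q g⟩

theorem isExpPoly_exp_sub_exp (a w : ℂ) : IsExpPoly fun z ↦ exp (a * z) - exp (a * w) :=
  expPolySubalgebra.sub_mem (isExpPoly_exp a) (isExpPoly_const (exp (a * w)))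

theorem infinite_setOf_exp_sub_exp_eq_zero {a : ℂ} (ha : a ≠ 0) (w : ℂ) :
    {z | exp (a * z) - exp (a * w) = 0}.Infinite := by
  have hinj : Function.Injective fun n : ℤ ↦ w + n * (2 * Real.pi * I) / a := fun n n' h ↦ by
    simpa [ha, Real.pi_ne_zero, I_ne_zero] using h
  refine (infinite_range_of_injective hinj).mono ?_
  rintro _ ⟨n, rfl⟩
  refine sub_eq_zero.2 (exp_eq_exp_iff_exists_int.2 ⟨n, ?_⟩)
  field_simp

theorem eDvd_exp_natCast_mul_sub_exp (a w : ℂ) (m : ℕ) :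
    EDvd (fun z ↦ exp (a * z) - exp (a * w)) fun z ↦ exp (m * a * z) - exp (m * a * w) := by
  refine ⟨∑ i ∈ Finset.range m, (fun z ↦ exp (a * z)) ^ i * (fun _ ↦ exp (a * w)) ^ (m - 1 - i),
    sum_mem (S := expPolySubalgebra) fun i _ ↦ mul_mem (pow_mem (isExpPoly_exp a) _)
      (pow_mem (isExpPoly_const (exp (a * w))) _), ?_⟩
  funext z
  have hgeom := (Commute.all (exp (a * z)) (exp (a * w))).mul_geom_sum₂ m
  rw [← exp_nat_mul, ← exp_nat_mul, ← mul_assoc, ← mul_assoc] at hgeom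
  simp [hgeom]

theorem eDvd_exp_intCast_mul_sub_exp (a w : ℂ) (m : ℤ) :
    EDvd (fun z ↦ exp (a * z) - exp (a * w)) fun z ↦ exp (m * a * z) - exp (m * a * w) := by
  obtain ⟨n, rfl | rfl⟩ := m.eq_nat_or_neg
  · exact eDvd_exp_natCast_mul_sub_exp a w n
  · convert! (eDvd_exp_natCast_mul_sub_exp a w n).mul_right
      (isExpPoly_mul_exp (-exp (-(n * a * w))) (-(n * a))) using 1
    funext z
    simp only [Pi.mul_apply, Int.cast_neg, Int.cast_natCast, neg_mul, exp_neg]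
    have hz := exp_ne_zero (n * a * z)
    have hw := exp_ne_zero (n * a * w)
    field_simp
    ring

section Divisibility

variable {ι : Type*} {c μ : ι → ℂ} {a w : ℂ}

theorem eDvd_sum_of_sub_eq_intCast_mul {A : Finset ι} {j : ι}
    (hA : ∀ i ∈ A, ∃ m : ℤ, μ i - μ j = m * a) (h0 : ∑ i ∈ A, c i * exp (μ i * w) = 0) :
    EDvd (fun z ↦ exp (a * z) - exp (a * w)) (∑ i ∈ A, fun z ↦ c i * exp (μ i * z)) := by
  have hsum : (∑ i ∈ A, fun z ↦ c i * exp (μ i * z)) = ∑ i ∈ A,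
      (fun z ↦ exp ((μ i - μ j) * z) - exp ((μ i - μ j) * w)) * fun z ↦ c i * exp (μ j * z) := by
    funext z
    rw [Finset.sum_apply, Finset.sum_apply, ← sub_eq_zero, ← Finset.sum_sub_distrib,
      ← mul_zero (exp (μ j * (z - w))), ← h0, Finset.mul_sum]
    refine Finset.sum_congr rfl fun i _ ↦ ?_
    simp only [Pi.mul_apply, mul_sub, sub_mul, exp_sub]
    have hw := exp_ne_zero (μ j * w)
    field_simp
    ring
  rw [hsum]
  refine EDvd.sum fun i hi ↦ EDvd.mul_right ?_ (isExpPoly_mul_exp _ _)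
  obtain ⟨m, hm⟩ := hA i hi
  exact hm ▸ eDvd_exp_intCast_mul_sub_exp a w m

theorem eDvd_sum_of_finpartition [DecidableEq ι] {B : Finset ι} (P : Finpartition B)
    (hP : ∀ A ∈ P.parts, ∀ i ∈ A, ∀ j ∈ A, ∃ m : ℤ, μ i - μ j = m * a)
    (hmin : ∀ A ∈ P.parts, IsMinimalVanishing A fun i ↦ c i * exp (μ i * w)) :
    EDvd (fun z ↦ exp (a * z) - exp (a * w)) fun z ↦ ∑ i ∈ B, c i * exp (μ i * z) := by
  have hB : (fun z ↦ ∑ i ∈ B, c i * exp (μ i * z)) =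
      ∑ A ∈ P.parts, ∑ i ∈ A, fun z ↦ c i * exp (μ i * z) := by
    conv_lhs => rw [← P.biUnion_parts]
    funext z
    simp only [Finset.sum_apply]
    exact Finset.sum_biUnion P.disjoint
  rw [hB]
  refine EDvd.sum fun A hA ↦ ?_
  obtain ⟨j, hj⟩ := (hmin A hA).1
  exact eDvd_sum_of_sub_eq_intCast_mul (fun i hi ↦ hP A hA i hi j hj) (hmin A hA).2.1

end Divisibility

/-! ### Substituting exponentials into polynomials -/

/-- The substitution `X j ↦ exp (ω j z)`, sending a polynomial to an exponential polynomial in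
`z`. -/
def expSubst {k : ℕ} (ω : Fin k → ℂ) : MvPolynomial (Fin k) ℂ →ₐ[ℂ] ℂ → ℂ :=
  MvPolynomial.aeval fun j z ↦ exp (ω j * z)

section ExpSubst

variable {k : ℕ} {ω : Fin k → ℂ}

theorem expSubst_apply (P : MvPolynomial (Fin k) ℂ) (z : ℂ) :
    expSubst ω P z = MvPolynomial.eval (fun j ↦ exp (ω j * z)) P := by
  induction P using MvPolynomial.induction_on with
  | C a => simp [expSubst]
  | add p q hp hq => simp [hp, hq]
  | mul_X p j hp => simpa [expSubst] using hp

theorem isExpPoly_expSubst (P : MvPolynomial (Fin k) ℂ) : IsExpPoly (expSubst ω P) := by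
  induction P using MvPolynomial.induction_on with
  | C a => exact (MvPolynomial.algHom_C (expSubst ω) a).symm ▸ isExpPoly_const a
  | add p q hp hq => simpa only [map_add] using hp.add hq
  | mul_X p j hp =>
    simpa only [map_mul, expSubst, MvPolynomial.aeval_X] using hp.mul (isExpPoly_exp (ω j))

theorem exists_linearIndependent_rat_and_eq_sum {M : Set ℂ} (hM : M.Finite) :
    ∃ (k : ℕ) (ω : Fin k → ℂ), LinearIndependent ℚ ω ∧
      ∀ μ ∈ M, ∃ n : Fin k → ℤ, μ = ∑ j, n j * ω j := by
  let G : Submodule ℤ ℂ := .span ℤ M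
  have : Module.Finite ℤ G := Module.Finite.iff_fg.2 (Submodule.fg_span hM)
  let b : Module.Basis (Fin (Module.finrank ℤ G)) ℤ G := Module.finBasis ℤ G
  refine ⟨_, fun j ↦ (b j : ℂ), ?_, fun μ hμ ↦ ?_⟩
  · rw [← LinearIndependent.iff_fractionRing ℤ ℚ]
    exact b.linearIndependent.map' G.subtype G.ker_subtype
  · have hrepr := congr(G.subtype $(b.sum_repr ⟨μ, Submodule.subset_span hμ⟩))
    simp only [map_sum, map_smul, Submodule.subtype_apply, zsmul_eq_mul] at hrepr
    exact ⟨_, hrepr.symm⟩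

theorem exists_natCast_eq_add {α : Type*} [Finite α] (n : α → ℤ) :
    ∃ (K : ℕ) (e : α → ℕ), ∀ x, (e x : ℤ) = n x + K := by
  obtain ⟨l, hl⟩ := (finite_range n).bddBelow
  refine ⟨l.natAbs, fun x ↦ (n x + l.natAbs).toNat, fun x ↦ Int.toNat_of_nonneg ?_⟩
  have := hl (mem_range_self x)
  omega

theorem exists_eq_expSubst_mul_exp {ι : Type*} [Fintype ι] {c μ : ι → ℂ}
    (hμ : ∀ i, ∃ n : Fin k → ℤ, μ i = ∑ j, n j * ω j) :
    ∃ (P : MvPolynomial (Fin k) ℂ) (κ : ℂ),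
      (fun z ↦ ∑ i, c i * exp (μ i * z)) = expSubst ω P * fun z ↦ exp (κ * z) := by
  choose n hn using hμ
  obtain ⟨K, e, he⟩ := exists_natCast_eq_add fun p : ι × Fin k ↦ n p.1 p.2
  refine ⟨∑ i, MvPolynomial.C (c i) * ∏ j, MvPolynomial.X j ^ e (i, j), -(K * ∑ j, ω j),
    funext fun z ↦ ?_⟩
  rw [Pi.mul_apply, expSubst_apply]
  simp only [map_sum, map_mul, map_prod, map_pow, MvPolynomial.eval_C, MvPolynomial.eval_X,
    ← exp_nat_mul, ← exp_sum, Finset.sum_mul]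
  refine Finset.sum_congr rfl fun i _ ↦ ?_
  have he' (j) : (e (i, j) : ℂ) = n i j + K := mod_cast he (i, j)
  rw [mul_assoc, ← exp_add]
  congr 2
  simp only [hn, he', Finset.mul_sum, Finset.sum_mul, ← Finset.sum_neg_distrib,
    ← Finset.sum_add_distrib]
  exact Finset.sum_congr rfl fun j _ ↦ by ring

end ExpSubst

/-! ### Common divisors -/

theorem SchanuelConjecture.exists_exp_sub_exp_eDvd (hSC : SchanuelConjecture) {ι : Type*}
    {c μ : ι → ℂ} {S : Set ℂ} (hS : S.Infinite) (W : Submodule ℚ ℂ) [FiniteDimensional ℚ W]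
    (hW : ∀ z ∈ S, ∀ A : Finset ι, IsMinimalVanishing A (fun i ↦ c i * exp (μ i * z)) →
      ∀ i ∈ A, ∀ j ∈ A, (μ i - μ j) * z ∈ W)
    {B₁ B₂ : Finset ι} (hB₁ : ∀ z ∈ S, ∑ i ∈ B₁, c i * exp (μ i * z) = 0)
    (hB₂ : ∀ z ∈ S, ∑ i ∈ B₂, c i * exp (μ i * z) = 0) :
    ∃ a ≠ 0, ∃ w,
      EDvd (fun z ↦ exp (a * z) - exp (a * w)) (fun z ↦ ∑ i ∈ B₁, c i * exp (μ i * z)) ∧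
      EDvd (fun z ↦ exp (a * z) - exp (a * w)) fun z ↦ ∑ i ∈ B₂, c i * exp (μ i * z) := by
  classical
  obtain ⟨S₁, hS₁S, hS₁, P₁, hP₁⟩ := exists_infinite_subset_finpartition hS hB₁
  obtain ⟨S₂, hS₂S₁, hS₂, P₂, hP₂⟩ :=
    exists_infinite_subset_finpartition hS₁ fun z hz ↦ hB₂ z (hS₁S hz)
  have hmin : ∀ A ∈ P₁.parts ∪ P₂.parts, ∀ z ∈ S₂,
      IsMinimalVanishing A fun i ↦ c i * exp (μ i * z) := by
    intro A hA z hz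
    exact (Finset.mem_union.1 hA).elim (fun hA ↦ hP₁ A hA z (hS₂S₁ hz)) fun hA ↦ hP₂ A hA z hz
  obtain ⟨a, ha0, ha⟩ := hSC.exists_common_frequency hS₂ W _ hmin fun A hA z hz ↦
    hW z (hS₁S (hS₂S₁ hz)) A (hmin A hA z hz)
  obtain ⟨w, hw⟩ := hS₂.nonempty
  exact ⟨a, ha0, w,
    eDvd_sum_of_finpartition P₁ (fun A hA ↦ ha A (Finset.mem_union_left _ hA))
      fun A hA ↦ hP₁ A hA w (hS₂S₁ hw),
    eDvd_sum_of_finpartition P₂ (fun A hA ↦ ha A (Finset.mem_union_right _ hA))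
      fun A hA ↦ hP₂ A hA w hw⟩

section CommonDivisor

variable {k : ℕ} {ω : Fin k → ℂ} {P Q : MvPolynomial (Fin k) ℂ}

theorem SchanuelConjecture.exists_common_divisor_of_isRelPrime (hSC : SchanuelConjecture)
    (hω : LinearIndependent ℚ ω) (hPQ : IsRelPrime P Q)
    (hinf : {z | expSubst ω P z = 0 ∧ expSubst ω Q z = 0}.Infinite) :
    ∃ h, IsExpPoly h ∧ EDvd h (expSubst ω P) ∧ EDvd h (expSubst ω Q) ∧
      {z | h z = 0}.Infinite := by
  classical
  obtain ⟨N, c, μ, hP⟩ := isExpPoly_expSubst (ω := ω) P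
  obtain ⟨N', c', μ', hQ⟩ := isExpPoly_expSubst (ω := ω) Q
  let d : Fin N ⊕ Fin N' → ℂ := Sum.elim c c'
  let ν : Fin N ⊕ Fin N' → ℂ := Sum.elim μ μ'
  have hP' (z) : expSubst ω P z = ∑ i ∈ Finset.univ.map .inl, d i * exp (ν i * z) := by
    simpa [d, ν] using hP z
  have hQ' (z) : expSubst ω Q z = ∑ i ∈ Finset.univ.map .inr, d i * exp (ν i * z) := by
    simpa [d, ν] using hQ z
  obtain ⟨W, hW, hsub⟩ := hSC.exists_finiteDimensional_sub_mul_mem hω hPQ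
    (Finset.univ.image d ∪ Finset.univ.image ν)
  obtain ⟨a, ha, w, hdP, hdQ⟩ := hSC.exists_exp_sub_exp_eDvd hinf W
    (fun z hz A ↦ hsub z (expSubst_apply P z ▸ hz.1) (expSubst_apply Q z ▸ hz.2) (by simp))
    (fun z hz ↦ hP' z ▸ hz.1) fun z hz ↦ hQ' z ▸ hz.2
  rw [← funext hP'] at hdP
  rw [← funext hQ'] at hdQ
  exact ⟨_, isExpPoly_exp_sub_exp a w, hdP, hdQ, infinite_setOf_exp_sub_exp_eq_zero ha w⟩

theorem SchanuelConjecture.exists_common_divisor_expSubst (hSC : SchanuelConjecture)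
    (hω : LinearIndependent ℚ ω)
    (hinf : {z | expSubst ω P z = 0 ∧ expSubst ω Q z = 0}.Infinite) :
    ∃ h, IsExpPoly h ∧ EDvd h (expSubst ω P) ∧ EDvd h (expSubst ω Q) ∧
      {z | h z = 0}.Infinite := by
  obtain rfl | hP0 := eq_or_ne P 0
  · exact ⟨expSubst ω Q, isExpPoly_expSubst Q, ⟨0, isExpPoly_const 0, by simp⟩,
      ⟨1, isExpPoly_const 1, by simp⟩, hinf.mono fun z hz ↦ hz.2⟩
  obtain ⟨P, Q, D, hPQ, rfl, rfl⟩ := UniqueFactorizationMonoid.exists_reduced_factors P hP0 Q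
  by_cases hD : {z | expSubst ω D z = 0}.Infinite
  · exact ⟨expSubst ω D, isExpPoly_expSubst D, ⟨_, isExpPoly_expSubst P, map_mul ..⟩,
      ⟨_, isExpPoly_expSubst Q, map_mul ..⟩, hD⟩
  have hinf' : {z | expSubst ω P z = 0 ∧ expSubst ω Q z = 0}.Infinite := by
    refine (hinf.sdiff (not_infinite.1 hD)).mono ?_
    rintro z ⟨⟨hDP, hDQ⟩, hDz⟩
    rw [map_mul, Pi.mul_apply] at hDP hDQ
    exact ⟨(mul_eq_zero.1 hDP).resolve_left hDz, (mul_eq_zero.1 hDQ).resolve_left hDz⟩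
  obtain ⟨h, hh, hP, hQ, hinfh⟩ := hSC.exists_common_divisor_of_isRelPrime hω hPQ hinf'
  rw [mul_comm D P, mul_comm D Q, map_mul, map_mul]
  exact ⟨h, hh, hP.mul_right (isExpPoly_expSubst D), hQ.mul_right (isExpPoly_expSubst D), hinfh⟩

end CommonDivisor

/-- **Shapiro's Conjecture** (assuming Schanuel's Conjecture): if two exponential
polynomials have infinitely many common zeros, they have a common divisor in `𝓔`
with infinitely many zeros. -/
theorem shapiro_conjecture (hSC : SchanuelConjecture)
    (f g : ℂ → ℂ) (hf : IsExpPoly f) (hg : IsExpPoly g)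
    (hinf : {z : ℂ | f z = 0 ∧ g z = 0}.Infinite) :
    ∃ h : ℂ → ℂ, IsExpPoly h ∧ EDvd h f ∧ EDvd h g ∧ {z : ℂ | h z = 0}.Infinite := by
  obtain ⟨N, c, μ, hf⟩ := hf
  obtain ⟨N', c', μ', hg⟩ := hg
  obtain ⟨k, ω, hω, hμ⟩ := exists_linearIndependent_rat_and_eq_sum
    ((finite_range μ).union (finite_range μ'))
  obtain ⟨P, κ, hP⟩ := exists_eq_expSubst_mul_exp (c := c) fun i ↦ hμ (μ i) (.inl ⟨i, rfl⟩)
  obtain ⟨Q, κ', hQ⟩ := exists_eq_expSubst_mul_exp (c := c') fun i ↦ hμ (μ' i) (.inr ⟨i, rfl⟩)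
  obtain rfl : f = expSubst ω P * fun z ↦ exp (κ * z) := (funext hf).trans hP
  obtain rfl : g = expSubst ω Q * fun z ↦ exp (κ' * z) := (funext hg).trans hQ
  simp only [Pi.mul_apply, mul_eq_zero, exp_ne_zero, or_false] at hinf
  obtain ⟨h, hh, hhP, hhQ, hinfh⟩ := hSC.exists_common_divisor_expSubst hω hinf
  exact ⟨h, hh, hhP.mul_right (isExpPoly_exp κ), hhQ.mul_right (isExpPoly_exp κ'), hinfh⟩
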